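/- arXiv:2406.15589 — 15 statements merged into one kernel-verified Lean document; each statement's English description precedes it below -/
import Mathlib

section
/- Let n ≥ 2 and let α, α' ∈ F^{n−1} with α ≠ α'. Then the number of points x ∈ F^n with F_α(x) = 0 and F_{α'}(x) = 0 equals q^{2n−2}. In particular, the varieties obtained from the Buekenhout–Metz quasi-Hermitian variety by the translation group are mutually q^{2n−2}-intersecting in affine points. -/
/-- The affine form `F_α` associated to translates of the Buekenhout–Metz
quasi-Hermitian variety.  A point of `F^n` is represented as a pair
`x = (x₁,…,x_{n-1}, x_n) : (Fin (n-1) → F) × F`. -/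
def Falpha {F : Type*} [Field F] (q : ℕ) {m : ℕ} (a b : F) (α : Fin m → F)
    (x : (Fin m → F) × F) : F :=
  x.2 ^ q - x.2 + ∑ i : Fin m,
    (a ^ q * x.1 i ^ (2 * q) - a * x.1 i ^ 2 - (b ^ q - b) * x.1 i ^ (q + 1)
      + (2 * a ^ q * α i ^ q - (b ^ q - b) * α i) * x.1 i ^ q
      - (2 * a * α i + (b ^ q - b) * α i ^ q) * x.1 i)

/-- The additive map `x ↦ x ^ q - x`. -/
def phiHom {F : Type*} [Field F] (q : ℕ) (hadd : ∀ x y : F, (x + y) ^ q = x ^ q + y ^ q) :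
    F →+ F :=
  AddMonoidHom.mk' (fun x => x ^ q - x) (fun x y => by rw [hadd]; ring)

theorem phiHom_apply {F : Type*} [Field F] (q : ℕ)
    (hadd : ∀ x y : F, (x + y) ^ q = x ^ q + y ^ q) (x : F) :
    phiHom q hadd x = x ^ q - x := rfl

theorem frob_add {F : Type*} [Field F] [Fintype F] (q : ℕ) (hq : IsPrimePow q)
    (hF : Fintype.card F = q ^ 2) (x y : F) : (x + y) ^ q = x ^ q + y ^ q := by
  obtain ⟨p, k, hp, hk, rfl⟩ := hq
  have hp' : p.Prime := hp.nat_prime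
  have : Fact p.Prime := ⟨hp'⟩
  have : CharP F p := by
    rw [← pow_mul] at hF
    exact charP_of_card_eq_prime_pow hF
  exact add_pow_char_pow x y p k

theorem card_ker_mul_range {G H : Type*} [AddGroup G] [AddGroup H] (f : G →+ H) :
    Nat.card f.ker * Nat.card f.range = Nat.card G := by
  rw [← AddSubgroup.index_ker]
  exact AddSubgroup.card_mul_index _

theorem card_trace_le {F : Type*} [Field F] [Fintype F] (q : ℕ) (hq : 1 < q) (e : F) (s : Set F)
    (hs : ∀ x ∈ s, x ^ q + e * x = 0) : Nat.card s ≤ q := by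
  classical
  have hdeg : (Polynomial.X ^ q + Polynomial.C e * Polynomial.X : Polynomial F).natDegree = q := by
    compute_degree!
    all_goals first | exact hq.le | simp [hq.ne']
  have hne : (Polynomial.X ^ q + Polynomial.C e * Polynomial.X : Polynomial F) ≠ 0 := by
    intro h
    rw [h] at hdeg
    simp at hdeg
    omega
  have hsub : s.toFinset ⊆
      (Polynomial.X ^ q + Polynomial.C e * Polynomial.X : Polynomial F).roots.toFinset := by
    intro x hx
    rw [Multiset.mem_toFinset, Polynomial.mem_roots hne]
    simpa using hs x (by simpa using hx)
  have h1 := Finset.card_le_card hsub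
  have h2 := Multiset.toFinset_card_le
    (Polynomial.X ^ q + Polynomial.C e * Polynomial.X : Polynomial F).roots
  have h3 := Polynomial.card_roots'
    (Polynomial.X ^ q + Polynomial.C e * Polynomial.X : Polynomial F)
  rw [Nat.card_eq_card_toFinset]
  omega

theorem mul_eq_sq {u v q : ℕ} (hq : 0 < q) (hu : u ≤ q) (hv : v ≤ q) (h : u * v = q ^ 2) :
    u = q ∧ v = q := by
  constructor <;> nlinarith

/-- Two distinct translates of the BM quasi-Hermitian variety meet in exactly
`q^(2n-2)` affine points. -/
theorem mutually_intersecting (q : ℕ) (hq : IsPrimePow q)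
    (F : Type*) [Field F] [Fintype F] [DecidableEq F] (hF : Fintype.card F = q ^ 2)
    (a b : F) (ha : a ≠ 0) (hb : b ^ q ≠ b)
    (hab : 4 * a ^ (q + 1) + (b ^ q - b) ^ 2 ≠ 0)
    (n : ℕ) (hn : 2 ≤ n) (α α' : Fin (n - 1) → F) (hαα' : α ≠ α') :
    (Finset.univ.filter (fun x : (Fin (n - 1) → F) × F =>
        Falpha q a b α x = 0 ∧ Falpha q a b α' x = 0)).card = q ^ (2 * n - 2) := by
  have hadd := frob_add (F := F) q hq hF
  have hq1 : 1 < q := hq.one_lt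
  have hq0 : q ≠ 0 := by omega
  have hqq : ∀ x : F, (x ^ q) ^ q = x := by
    intro x
    rw [← pow_mul, ← sq, ← hF, FiniteField.pow_card]
  set φ := phiHom q hadd with hφ
  have hφa : ∀ x, φ x = x ^ q - x := phiHom_apply q hadd
  have hsub : ∀ x y : F, (x - y) ^ q = x ^ q - y ^ q := by
    intro x y
    have := hadd (x - y) y
    rw [sub_add_cancel] at this
    rw [this]; ring
  have hneg : ∀ x : F, (-x) ^ q = -x ^ q := by
    intro x
    have := hsub 0 x
    simpa [hq0] using this
  -- the kernel and the trace-zero elements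
  have hker : Nat.card φ.ker ≤ q := by
    refine card_trace_le q hq1 (-1) (φ.ker : Set F) ?_
    intro x hx
    have : φ x = 0 := hx
    rw [hφa] at this
    rw [← this]; ring
  have hTle : Nat.card ({y : F | y ^ q + y = 0} : Set F) ≤ q := by
    refine card_trace_le q hq1 1 _ ?_
    intro x hx
    simpa using hx
  have hrT : (φ.range : Set F) ⊆ {y : F | y ^ q + y = 0} := by
    rintro _ ⟨x, rfl⟩
    simp only [Set.mem_ofPred_eq, hφa, hsub, hqq]
    ring
  have hrange : Nat.card φ.range ≤ q := (Nat.card_mono (Set.toFinite _) hrT).trans hTle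
  have hmul : Nat.card φ.ker * Nat.card φ.range = q ^ 2 := by
    rw [card_ker_mul_range, Nat.card_eq_fintype_card, hF]
  obtain ⟨hk, hr⟩ := mul_eq_sq (by omega) hker hrange hmul
  have hrTeq : (φ.range : Set F) = {y : F | y ^ q + y = 0} := by
    apply Set.eq_of_subset_of_ncard_le hrT
    change Nat.card _ ≤ Nat.card φ.range
    rw [hr]; exact hTle
  have hfib : ∀ y : F, y ^ q + y = 0 →
      (Finset.univ.filter (fun t : F => φ t = y)).card = q := by
    intro y hy
    have hy' : y ∈ (φ.range : Set F) := by rw [hrTeq]; exact hy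
    obtain ⟨t0, ht0⟩ := hy'
    rw [← hk, Nat.card_eq_fintype_card, Fintype.card_subtype]
    refine Finset.card_bij (fun t _ => t - t0) ?_ ?_ ?_
    · intro t ht
      simp only [Finset.mem_filter, Finset.mem_univ, true_and] at ht ⊢
      rw [AddMonoidHom.mem_ker, map_sub, ht, ht0, sub_self]
    · intro s _ t _ h
      exact sub_left_injective h
    · intro t ht
      simp only [Finset.mem_filter, Finset.mem_univ, true_and] at ht
      rw [AddMonoidHom.mem_ker] at ht
      refine ⟨t + t0, ?_, by simp⟩
      simp [ht, ht0]
  -- the linear form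
  set c : F := b ^ q - b with hc
  have hcq : c ^ q = -c := by rw [hc, hsub, hqq]; ring
  have h2q : (2 : F) ^ q = 2 := by
    have := hadd 1 1
    rw [one_pow] at this
    norm_num at this
    exact this
  let A : Fin (n - 1) → F := fun i => 2 * a * (α i - α' i) + c * (α i - α' i) ^ q
  have hAq : ∀ i, A i ^ q = 2 * a ^ q * (α i - α' i) ^ q - c * (α i - α' i) := by
    intro i
    simp only [A]
    rw [hadd, mul_pow, mul_pow, mul_pow, hqq, hcq, h2q]
    ring
  have hA0 : ∀ i, A i = 0 → α i = α' i := by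
    intro i hi
    have h1 := hAq i
    rw [hi, zero_pow hq0] at h1
    have h2 : 2 * a * (α i - α' i) + c * (α i - α' i) ^ q = 0 := hi
    have h3 : (4 * a ^ (q + 1) + c ^ 2) * (α i - α' i) = 0 := by
      rw [pow_succ]
      linear_combination (2 * a ^ q) * h2 + c * h1
    exact sub_eq_zero.mp ((mul_eq_zero.mp h3).resolve_left hab)
  obtain ⟨j, hj⟩ : ∃ j, α j ≠ α' j := Function.ne_iff.mp hαα'
  have hAj : A j ≠ 0 := fun h => hj (hA0 j h)
  let ℓ : (Fin (n - 1) → F) →+ F :=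
    AddMonoidHom.mk' (fun x => ∑ i, A i * x i) (fun x y => by
      simp [mul_add, Finset.sum_add_distrib])
  have hℓa : ∀ x, ℓ x = ∑ i, A i * x i := fun _ => rfl
  have hℓ : Function.Surjective ℓ := by
    intro t
    refine ⟨Pi.single j ((A j)⁻¹ * t), ?_⟩
    rw [hℓa, Finset.sum_eq_single j]
    · simp [hAj]
    · intro i _ hij
      simp [hij]
    · simp
  have hrc : (φ.comp ℓ).range = φ.range := by
    ext y
    constructor
    · rintro ⟨x, rfl⟩
      exact ⟨ℓ x, rfl⟩
    · rintro ⟨t, rfl⟩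
      obtain ⟨x, rfl⟩ := hℓ t
      exact ⟨x, rfl⟩
  have hkc := card_ker_mul_range (φ.comp ℓ)
  rw [hrc, hr, Nat.card_eq_fintype_card (α := Fin (n - 1) → F), Fintype.card_fun, hF,
    Fintype.card_fin, ← pow_mul] at hkc
  have hkc' : (Finset.univ.filter (fun x => φ (ℓ x) = 0)).card * q = q ^ (2 * (n - 1)) := by
    rw [← hkc, Nat.card_eq_fintype_card, Fintype.card_subtype]
    simp only [AddMonoidHom.mem_ker, AddMonoidHom.comp_apply]
  -- Frobenius of sums
  have hsum : ∀ f : Fin (n - 1) → F, (∑ i, f i) ^ q = ∑ i, f i ^ q := by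
    intro f
    exact map_sum (AddMonoidHom.mk' (fun x : F => x ^ q) hadd) f Finset.univ
  let G : (Fin (n - 1) → F) → F := fun x => ∑ i : Fin (n - 1),
    (a ^ q * x i ^ (2 * q) - a * x i ^ 2 - c * x i ^ (q + 1)
      + (2 * a ^ q * α i ^ q - c * α i) * x i ^ q
      - (2 * a * α i + c * α i ^ q) * x i)
  have hG : ∀ x, (-G x) ^ q + (-G x) = 0 := by
    intro x
    have : G x ^ q = - G x := by
      simp only [G]
      rw [hsum, ← Finset.sum_neg_distrib]
      refine Finset.sum_congr rfl fun i _ => ?_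
      have e1 : x i ^ (2 * q) = (x i ^ q) ^ 2 := by rw [← pow_mul, mul_comm]
      have e2 : ((x i ^ q) ^ 2) ^ q = x i ^ 2 := by
        rw [← pow_mul, mul_comm 2 q, pow_mul, hqq]
      have e3 : (x i ^ 2) ^ q = (x i ^ q) ^ 2 := by rw [← pow_mul, e1]
      rw [e1, pow_succ (x i) q]
      simp only [hadd, hsub, mul_pow, hqq, hcq, h2q, e2, e3]
      ring
    rw [hneg, this]; ring
  have hdiff : ∀ x : (Fin (n - 1) → F) × F,
      Falpha q a b α x - Falpha q a b α' x = φ (ℓ x.1) := by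
    intro x
    rw [hφa, hℓa, hsum, Falpha, Falpha, add_sub_add_left_eq_sub, ← Finset.sum_sub_distrib,
      ← Finset.sum_sub_distrib]
    refine Finset.sum_congr rfl fun i _ => ?_
    rw [mul_pow, hAq]
    simp only [A]
    rw [hsub]
    ring
  have hiff : ∀ x : (Fin (n - 1) → F) × F,
      (Falpha q a b α x = 0 ∧ Falpha q a b α' x = 0) ↔ (φ (ℓ x.1) = 0 ∧ φ x.2 = -G x.1) := by
    intro x
    have h1 : Falpha q a b α x = φ x.2 + G x.1 := by rw [hφa]; rfl
    have h2 := hdiff x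
    constructor
    · rintro ⟨u, v⟩
      rw [u, v, sub_zero] at h2
      rw [u] at h1
      exact ⟨h2.symm, eq_neg_of_add_eq_zero_left h1.symm⟩
    · rintro ⟨u, v⟩
      rw [v, neg_add_cancel] at h1
      rw [u, h1, zero_sub, neg_eq_zero] at h2
      exact ⟨h1, h2⟩
  have hexp : 2 * n - 2 = 2 * (n - 1) := by omega
  rw [hexp, ← hkc', Finset.card_filter, Fintype.sum_prod_type, Finset.card_filter,
    Finset.sum_mul]
  refine Finset.sum_congr rfl fun x _ => ?_
  rw [← Finset.card_filter]
  simp only [hiff]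
  by_cases hx : φ (ℓ x) = 0
  · simp only [hx, true_and, if_true, one_mul]
    exact hfib _ (hG x)
  · simp [hx]
end

section
/- Let n ≥ 2 and let α, α' ∈ F^{n−1} with α ≠ α'. Then the affine zero sets {x ∈ F^n : F_α(x) = 0} and {x ∈ F^n : F_{α'}(x) = 0} are distinct (i.e. the varieties V(F_α) and V(F_{α'}) are different). -/
/-- Distinct parameters `α ≠ α'` give distinct affine zero sets `V(F_α) ≠ V(F_{α'})`. -/
theorem distinct_varieties (q : ℕ) (hq : IsPrimePow q)
    (F : Type*) [Field F] [Fintype F] [DecidableEq F] (hF : Fintype.card F = q ^ 2)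
    (a b : F) (ha : a ≠ 0) (hb : b ^ q ≠ b)
    (hab : 4 * a ^ (q + 1) + (b ^ q - b) ^ 2 ≠ 0)
    (n : ℕ) (hn : 2 ≤ n) (α α' : Fin (n - 1) → F) (hαα' : α ≠ α') :
    {x : (Fin (n - 1) → F) × F | Falpha q a b α x = 0} ≠
      {x : (Fin (n - 1) → F) × F | Falpha q a b α' x = 0} := by
  obtain ⟨σ, hσ⟩ : ∃ σ : F →+* F, ∀ x, x ^ q = σ x := by
    obtain ⟨p, k, hp, hk, rfl⟩ := hq
    have hp' : p.Prime := hp.nat_prime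
    have : Fact p.Prime := ⟨hp'⟩
    have : CharP F p := by
      obtain ⟨r, hr⟩ := CharP.exists F
      obtain ⟨m, hr', hm⟩ := FiniteField.card F r
      have h1 : r ∣ p := by
        have : r ∣ (p ^ k) ^ 2 := by
          rw [← hF, hm]; exact dvd_pow_self _ m.pos.ne'
        exact hr'.dvd_of_dvd_pow (hr'.dvd_of_dvd_pow this)
      rwa [(Nat.prime_dvd_prime_iff_eq hr' hp').1 h1] at hr
    exact ⟨iterateFrobenius F p k, fun x => by rw [iterateFrobenius_def]⟩
  have hσσ : ∀ x, σ (σ x) = x := fun x => by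
    rw [← hσ, ← hσ, ← pow_mul, ← sq, ← hF, FiniteField.pow_card]
  have hu : ∃ u : F, u + σ u = 1 := by
    obtain ⟨w, hw⟩ : ∃ w : F, w + σ w ≠ 0 := by
      by_contra! h
      have h1 := h 1
      have h2 := h b
      rw [map_one] at h1
      apply hb
      rw [hσ]
      linear_combination h2 - b * h1
    refine ⟨w / (w + σ w), ?_⟩
    rw [map_div₀, map_add, hσσ, add_comm (σ w) w]
    field_simp
  obtain ⟨u, hu⟩ := hu
  have key : ∀ t : F, σ t = -t → ∃ y : F, σ y - y = t := fun t ht =>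
    ⟨-(t * u), by rw [map_neg, map_mul, ht]; linear_combination t * hu⟩
  intro hV
  apply hαα'
  set c := b ^ q - b with hc
  have hσc : σ c = -c := by rw [hc, hσ, map_sub, hσσ]; ring
  have hdiff : ∀ x : Fin (n - 1) → F, ∃ y, Falpha q a b α (x, y) = 0 := by
    intro x
    obtain ⟨y, hy⟩ := key (-∑ i : Fin (n - 1),
      (a ^ q * x i ^ (2 * q) - a * x i ^ 2 - (b ^ q - b) * x i ^ (q + 1)
      + (2 * a ^ q * α i ^ q - (b ^ q - b) * α i) * x i ^ q
      - (2 * a * α i + (b ^ q - b) * α i ^ q) * x i)) (by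
        rw [map_neg, map_sum]
        refine congrArg Neg.neg ?_
        rw [← Finset.sum_neg_distrib]
        refine Finset.sum_congr rfl fun i _ => ?_
        rw [← hc, mul_comm 2 q, pow_mul, pow_succ (x i) q]
        simp only [hσ, map_add, map_sub, map_mul, map_pow, map_ofNat, hσσ, hσc]
        ring)
    refine ⟨y, ?_⟩
    unfold Falpha
    simp only [hσ y, hy]
    ring
  have hD : ∀ i, ∀ x : F, (2 * σ a * σ (α i - α' i) - c * (α i - α' i)) * σ x
      = (2 * a * (α i - α' i) + c * σ (α i - α' i)) * x := by
    intro i x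
    obtain ⟨y, hy⟩ := hdiff (Pi.single i x)
    have hy' : Falpha q a b α' (Pi.single i x, y) = 0 := by
      have : (Pi.single i x, y) ∈ {x : (Fin (n - 1) → F) × F | Falpha q a b α x = 0} := hy
      rw [hV] at this
      exact this
    have h := sub_eq_zero.2 (hy.trans hy'.symm)
    unfold Falpha at h
    rw [add_sub_add_left_eq_sub, ← Finset.sum_sub_distrib, Finset.sum_eq_single i] at h
    · simp only [Pi.single_eq_same, hσ] at h
      rw [map_sub, hc, hσ b]
      linear_combination h
    · intro j _ hj
      simp [Pi.single_eq_of_ne hj, hσ, pow_mul]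
    · simp
  funext i
  have h1 := hD i 1
  have h2 := hD i b
  rw [map_one] at h1
  have hD0 : 2 * σ a * σ (α i - α' i) - c * (α i - α' i) = 0 := by
    have h3 : (2 * σ a * σ (α i - α' i) - c * (α i - α' i)) * c = 0 := by
      have hc' : c = σ b - b := by rw [hc, hσ]
      linear_combination h2 - b * h1 + (2 * σ a * σ (α i - α' i) - c * (α i - α' i)) * hc'
    exact (mul_eq_zero.1 h3).resolve_right (sub_ne_zero.2 hb)
  have hD1 : 2 * a * (α i - α' i) + c * σ (α i - α' i) = 0 := by
    linear_combination hD0 - h1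
  have : (4 * a ^ (q + 1) + c ^ 2) * (α i - α' i) = 0 := by
    rw [pow_succ, hσ]
    linear_combination 2 * σ a * hD1 - c * hD0
  exact sub_eq_zero.1 ((mul_eq_zero.1 this).resolve_left hab)
end

section
/- Let n ≥ 2. For every α ∈ F^{n−1}, the number of points x ∈ F^n with F_α(x) = 0 equals q^{2n−1}. In particular the Buekenhout–Metz quasi-Hermitian variety B_{a,b} has exactly q^{2n−1} affine points. -/
open Polynomial in
lemma card_aux {F : Type*} [Field F] [Fintype F] [DecidableEq F] (q : ℕ) (hq : 1 < q) (c : F) :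
    (Finset.univ.filter (fun z : F => z ^ q + c * z = 0)).card ≤ q := by
  have hd : (X ^ q + C c * X : F[X]).natDegree = q := by
    rw [natDegree_add_eq_left_of_natDegree_lt]
    · simp
    · rw [natDegree_X_pow]
      exact lt_of_le_of_lt (natDegree_C_mul_le _ _) (by simpa using hq)
  have h0 : (X ^ q + C c * X : F[X]) ≠ 0 := by
    intro h; rw [h] at hd; simp at hd; omega
  calc _ ≤ (X ^ q + C c * X : F[X]).roots.toFinset.card := by
        apply Finset.card_le_card
        intro z hz
        simp only [Finset.mem_filter, Finset.mem_univ, true_and] at hz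
        simp [Multiset.mem_toFinset, mem_roots h0, IsRoot, hz]
    _ ≤ Multiset.card (X ^ q + C c * X : F[X]).roots := Multiset.toFinset_card_le _
    _ ≤ _ := (card_roots' _).trans hd.le

lemma card_fixed {F : Type*} [Field F] [Fintype F] [DecidableEq F] (q : ℕ) (hq : 1 < q)
    (hF : Fintype.card F = q ^ 2) (σ : F →+* F) (hσ : ∀ x, σ x = x ^ q) :
    (Finset.univ.filter (fun z : F => z ^ q - z = 0)).card = q := by
  have h1 := card_aux q hq (-1 : F)
  have h2 := card_aux q hq (1 : F)
  simp only [neg_mul, one_mul, ← sub_eq_add_neg] at h1 h2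
  have h3 : Fintype.card F ≤ (Finset.univ.filter (fun z : F => z ^ q - z = 0)).card *
      (Finset.univ.filter (fun z : F => z ^ q + z = 0)).card := by
    rw [← Finset.card_univ]
    refine Finset.card_le_mul_card_image_of_maps_to (f := fun z : F => z ^ q - z) ?_ _ ?_
    · intro z _
      simp only [Finset.mem_filter, Finset.mem_univ, true_and]
      have : (z ^ q) ^ q = z := by rw [← pow_mul, ← sq, ← hF, FiniteField.pow_card]
      rw [← hσ, map_sub, hσ, hσ, this]; ring
    · intro y _
      rcases (Finset.univ.filter (fun z : F => z ^ q - z = y)).eq_empty_or_nonempty with h | ⟨w, hw⟩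
      · simp [h]
      · simp only [Finset.mem_filter, Finset.mem_univ, true_and] at hw
        refine Finset.card_le_card_of_injOn (fun z => z - w) ?_ ?_
        · intro z hz
          simp only [Finset.coe_filter, Finset.mem_univ, true_and, Set.mem_ofPred_eq] at hz ⊢
          rw [← hσ, map_sub, hσ, hσ]; linear_combination hz - hw
        · intro x _ y _ h; simpa using h
  rw [hF] at h3
  nlinarith

/-- Each variety `V(F_α)` has exactly `q^(2n-1)` affine points. -/
theorem affine_point_count (q : ℕ) (hq : IsPrimePow q)
    (F : Type*) [Field F] [Fintype F] [DecidableEq F] (hF : Fintype.card F = q ^ 2)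
    (a b : F) (ha : a ≠ 0) (hb : b ^ q ≠ b)
    (n : ℕ) (hn : 2 ≤ n) (α : Fin (n - 1) → F) :
    (Finset.univ.filter (fun x : (Fin (n - 1) → F) × F =>
        Falpha q a b α x = 0)).card = q ^ (2 * n - 1) := by
  have hq1 : 1 < q := hq.one_lt
  obtain ⟨σ, hσ⟩ : ∃ σ : F →+* F, ∀ x, σ x = x ^ q := by
    obtain ⟨p, k, hp, hk, rfl⟩ := hq
    haveI : Fact p.Prime := ⟨hp.nat_prime⟩
    haveI : CharP F p := charP_of_card_eq_prime_pow (f := k * 2) (by rw [hF, pow_mul])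
    exact ⟨iterateFrobenius F p k, fun x => iterateFrobenius_def p k x⟩
  have hK := card_fixed q hq1 hF σ hσ
  let g : (Fin (n - 1) → F) → F := fun x => ∑ i,
    (a * x i ^ 2 - b * x i ^ (q + 1) + 2 * a * α i * x i - b * (α i * x i ^ q + α i ^ q * x i))
  have hinv : ∀ z : F, (z ^ q) ^ q = z := fun z => by
    rw [← pow_mul, ← sq, ← hF, FiniteField.pow_card]
  have key : ∀ x, Falpha q a b α x = (x.2 + g x.1) ^ q - (x.2 + g x.1) := by
    intro x
    have hg : (g x.1) ^ q - g x.1 = ∑ i : Fin (n - 1),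
    (a ^ q * x.1 i ^ (2 * q) - a * x.1 i ^ 2 - (b ^ q - b) * x.1 i ^ (q + 1)
      + (2 * a ^ q * α i ^ q - (b ^ q - b) * α i) * x.1 i ^ q
      - (2 * a * α i + (b ^ q - b) * α i ^ q) * x.1 i) := by
      rw [← hσ, map_sum, ← Finset.sum_sub_distrib]
      refine Finset.sum_congr rfl fun i _ => ?_
      have e2 : σ 2 = 2 := map_ofNat σ 2
      have e3 : x.1 i ^ (2 * q) = (x.1 i ^ q) ^ 2 := by rw [mul_comm, pow_mul]
      have e4 : x.1 i ^ (q + 1) = x.1 i ^ q * x.1 i := pow_succ _ _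
      rw [e3, e4]
      simp only [map_sub, map_add, map_mul, map_pow, e2]
      simp only [← hσ]
      have h5 : σ (σ (x.1 i)) = x.1 i := by rw [hσ, hσ, hinv]
      have h6 : σ (σ (α i)) = α i := by rw [hσ, hσ, hinv]
      simp only [h5, h6]
      ring
    rw [Falpha, ← hg, ← hσ (x.2 + _), map_add, hσ, hσ]; ring
  have hcard : (Finset.univ.filter (fun x : (Fin (n - 1) → F) × F =>
        Falpha q a b α x = 0)).card = ((Finset.univ : Finset (Fin (n - 1) → F)) ×ˢ
        (Finset.univ.filter (fun z : F => z ^ q - z = 0))).card := by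
    refine Finset.card_bij' (fun x _ => (x.1, x.2 + g x.1)) (fun x _ => (x.1, x.2 - g x.1))
      ?_ ?_ ?_ ?_
    · intro x hx; simpa [key] using hx
    · intro x hx; simpa [key] using hx
    · intro x hx; simp
    · intro x hx; simp
  rw [hcard, Finset.card_product, hK, Finset.card_univ, Fintype.card_fun, Fintype.card_fin, hF,
    ← pow_mul, ← pow_succ]
  congr 1
  omega
end

section
/- Let n ≥ 2. For every α ∈ F^{n−1} and every x ∈ F^n, the value F_α(x) has trace zero, i.e. F_α(x) + F_α(x)^q = 0; equivalently F_α takes all its values in the q-element set T₀ = {u ∈ F : u + u^q = 0}. -/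
/-- The form `F_α` takes all its values in `T₀ = {u | u + u^q = 0}`. -/
theorem values_have_trace_zero (q : ℕ) (hq : IsPrimePow q)
    (F : Type*) [Field F] [Fintype F] (hF : Fintype.card F = q ^ 2)
    (a b : F) (ha : a ≠ 0) (hb : b ^ q ≠ b)
    (n : ℕ) (hn : 2 ≤ n) :
    ∀ (α : Fin (n - 1) → F) (x : (Fin (n - 1) → F) × F),
      Falpha q a b α x + (Falpha q a b α x) ^ q = 0 := by
  intro α x
  obtain ⟨p, k, hp, hk, rfl⟩ := hq
  have hp' : p.Prime := hp.nat_prime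
  haveI : Fact p.Prime := ⟨hp'⟩
  haveI : CharP F p := by
    obtain ⟨r, hr⟩ := CharP.exists F
    obtain ⟨m, hrp, hm⟩ := FiniteField.card F r
    have h1 : r ∣ (p ^ k) ^ 2 := by
      rw [← hF, hm]
      exact dvd_pow_self r m.ne_zero
    have h2 : r = p := (Nat.prime_dvd_prime_iff_eq hrp hp').1
      (hrp.dvd_of_dvd_pow (hrp.dvd_of_dvd_pow h1))
    exact h2 ▸ hr
  obtain ⟨s, hs⟩ : ∃ s : F →+* F, ∀ y, y ^ (p ^ k) = s y :=
    ⟨iterateFrobenius F p k, fun y => (iterateFrobenius_def p k y).symm⟩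
  have hss : ∀ y, s (s y) = y := by
    intro y
    rw [← hs, ← hs, ← pow_mul, ← sq, ← hF, FiniteField.pow_card]
  rw [hs]
  unfold Falpha
  simp only [pow_succ _ (p ^ k), mul_comm 2 (p ^ k), pow_mul, hs]
  simp only [map_add, map_sub, map_sum, map_mul, map_pow, hss, map_ofNat]
  rw [add_add_add_comm, ← Finset.sum_add_distrib, Finset.sum_eq_zero]
  · ring
  · intro i _
    ring
end

section
/- Let n ≥ 2 and let x = (x₁,…,x_n) and x' = (x₁',…,x_n') be two distinct elements of W = F^{n−1} × C. Then there exists α ∈ F^{n−1} such that F_α(x) ≠ F_α(x'). -/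
theorem frob_sub_aux (q : ℕ) (hq : IsPrimePow q)
    (F : Type*) [Field F] [Fintype F] (hF : Fintype.card F = q ^ 2) (x y : F) :
    (x - y) ^ q = x ^ q - y ^ q := by
  obtain ⟨p, k, hp, hk, rfl⟩ := hq
  obtain ⟨r, hr⟩ := CharP.exists F
  obtain ⟨m, hrp, hm⟩ := FiniteField.card F r
  have hp' : p.Prime := hp.nat_prime
  have h1 : r ∣ (p ^ k) ^ 2 := by
    rw [← hF, hm]
    exact dvd_pow_self r m.ne_zero
  have h2 : r = p :=
    (Nat.prime_dvd_prime_iff_eq hrp hp').1 (hrp.dvd_of_dvd_pow (hrp.dvd_of_dvd_pow h1))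
  subst h2
  haveI : Fact r.Prime := ⟨hrp⟩
  exact sub_pow_char_pow x y k

theorem Falpha_single_aux {F : Type*} [Field F] (q : ℕ) (hq : q ≠ 0) {m : ℕ} (a b : F)
    (i : Fin m) (c : F) (x : (Fin m → F) × F) :
    Falpha q a b (Pi.single i c) x = Falpha q a b 0 x +
      ((2 * a ^ q * c ^ q - (b ^ q - b) * c) * x.1 i ^ q
      - (2 * a * c + (b ^ q - b) * c ^ q) * x.1 i) := by
  have key : ∀ j : Fin m, (a ^ q * x.1 j ^ (2 * q) - a * x.1 j ^ 2 - (b ^ q - b) * x.1 j ^ (q + 1)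
      + (2 * a ^ q * (Pi.single i c : Fin m → F) j ^ q
        - (b ^ q - b) * (Pi.single i c : Fin m → F) j) * x.1 j ^ q
      - (2 * a * (Pi.single i c : Fin m → F) j
        + (b ^ q - b) * (Pi.single i c : Fin m → F) j ^ q) * x.1 j)
      = (a ^ q * x.1 j ^ (2 * q) - a * x.1 j ^ 2 - (b ^ q - b) * x.1 j ^ (q + 1))
        + (if j = i then ((2 * a ^ q * c ^ q - (b ^ q - b) * c) * x.1 i ^ q
      - (2 * a * c + (b ^ q - b) * c ^ q) * x.1 i) else 0) := by
    intro j
    by_cases h : j = i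
    · subst h
      simp only [Pi.single_eq_same, if_true]
      ring
    · simp [h, zero_pow hq]
  unfold Falpha
  rw [Finset.sum_congr rfl (fun j _ => key j), Finset.sum_add_distrib]
  simp [zero_pow hq]
  ring

/-- Two distinct points of `W = F^{n-1} × C` are separated by some form `F_α`. -/
theorem separating_form (q : ℕ) (hq : IsPrimePow q)
    (F : Type*) [Field F] [Fintype F] [DecidableEq F] (hF : Fintype.card F = q ^ 2)
    (a b : F) (ha : a ≠ 0) (hb : b ^ q ≠ b)
    (hab : 4 * a ^ (q + 1) + (b ^ q - b) ^ 2 ≠ 0)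
    (C : Finset F) (hC : ∀ x : F, ∃! c : F, c ∈ C ∧ (c - x) ^ q = c - x)
    (n : ℕ) (hn : 2 ≤ n)
    (x x' : (Fin (n - 1) → F) × F) (hx : x.2 ∈ C) (hx' : x'.2 ∈ C) (hne : x ≠ x') :
    ∃ α : Fin (n - 1) → F, Falpha q a b α x ≠ Falpha q a b α x' := by
  have hq0 : q ≠ 0 := hq.ne_zero
  have hsub : ∀ x y : F, (x - y) ^ q = x ^ q - y ^ q := frob_sub_aux q hq F hF
  have hadd : ∀ x y : F, (x + y) ^ q = x ^ q + y ^ q := by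
    intro x y
    have h := hsub (x + y) y
    rw [add_sub_cancel_right] at h
    rw [h]; ring
  have hqq : ∀ x : F, (x ^ q) ^ q = x := by
    intro x
    rw [← pow_mul, ← sq, ← hF, FiniteField.pow_card]
  by_contra hcon
  push Not at hcon
  have h0 := hcon 0
  have hd : ∀ i, x.1 i = x'.1 i := by
    intro i
    set d := x.1 i - x'.1 i with hdd
    have hdq : d ^ q = x.1 i ^ q - x'.1 i ^ q := hsub _ _
    have hc : ∀ c : F, c ^ q * (2 * (a ^ q * d ^ q) - (b ^ q - b) * d)
        = c * ((b ^ q - b) * d ^ q + 2 * (a * d)) := by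
      intro c
      have h := hcon (Pi.single i c)
      rw [Falpha_single_aux q hq0, Falpha_single_aux q hq0, h0] at h
      rw [hdq, hdd]
      linear_combination h
    have h1 := hc 1
    have h2 := hc b
    rw [one_pow, one_mul, one_mul] at h1
    rw [← h1, ← sub_eq_zero, ← sub_mul] at h2
    have hu := (mul_eq_zero.1 h2).resolve_left (sub_ne_zero.2 hb)
    rw [hu] at h1
    have h3 : (4 * a ^ (q + 1) + (b ^ q - b) ^ 2) * d = 0 := by
      linear_combination (-(b ^ q - b)) * hu + 2 * a ^ q * h1.symm
    exact sub_eq_zero.1 ((mul_eq_zero.1 h3).resolve_left hab)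
  have h1 : x.1 = x'.1 := funext hd
  have h2 : x.2 ^ q - x.2 = x'.2 ^ q - x'.2 := by
    unfold Falpha at h0
    rw [h1] at h0
    exact add_right_cancel h0
  obtain ⟨c, -, hu⟩ := hC x'.2
  have e1 := hu x.2 ⟨hx, by rw [hsub]; linear_combination h2⟩
  have e2 := hu x'.2 ⟨hx', by rw [sub_self, zero_pow hq0]⟩
  exact hne (Prod.ext h1 (e1.trans e2.symm))
end

section
/- Let n ≥ 2, let α, α' ∈ F^{n−1} with α ≠ α', and let γ, δ ∈ T₀ = {u ∈ F : u + u^q = 0}. Then the number of points x ∈ W = F^{n−1} × C with F_α(x) = γ and F_{α'}(x) = δ equals q^{2n−3}. Consequently the q^{2n−1} × q^{2n−2} array whose rows are indexed by x ∈ W, columns by α ∈ F^{n−1}, and whose (x,α)-entry is F_α(x), is an orthogonal array OA(q^{2n−1}, q^{2n−2}, q, 2) of index q^{2n−3} over the q-symbol alphabet T₀. -/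
lemma fiber_card_aux {G H : Type*} [AddCommGroup G] [AddCommGroup H] [Fintype G] [DecidableEq H]
    (f : G →+ H) (T : Finset H) (h1 : ∀ x, f x ∈ T) (h2 : ∀ t ∈ T, ∃ x, f x = t)
    (t : H) (ht : t ∈ T) :
    Fintype.card G = T.card * (Finset.univ.filter (fun x => f x = t)).card := by
  classical
  rw [← Finset.card_univ, Finset.card_eq_sum_card_fiberwise (f := f) (t := T) (fun x _ => h1 x)]
  rw [Finset.sum_const_nat (m := (Finset.univ.filter (fun x => f x = t)).card)]
  intro s hs
  obtain ⟨y, rfl⟩ := h2 t ht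
  obtain ⟨z, rfl⟩ := h2 s hs
  apply Finset.card_bij (fun x _ => x - z + y)
  · intro x hx
    simp only [Finset.mem_filter, Finset.mem_univ, true_and] at hx ⊢
    simp [hx]
  · intro x _ x' _ h
    simpa using h
  · intro x hx
    simp only [Finset.mem_filter, Finset.mem_univ, true_and] at hx
    exact ⟨x - y + z, by simp [hx], by abel⟩

lemma frob_add_aux (q : ℕ) (hq : IsPrimePow q)
    (F : Type*) [Field F] [Fintype F] (hF : Fintype.card F = q ^ 2) (x y : F) :
    (x + y) ^ q = x ^ q + y ^ q := by
  obtain ⟨p, k, hp, hk, rfl⟩ := hq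
  have hp' := hp.nat_prime
  obtain ⟨r, hr⟩ := CharP.exists F
  obtain ⟨m, hr', hm⟩ := FiniteField.card F r
  have : r = p := by
    rw [hF, ← pow_mul] at hm
    have : r ∣ p ^ (k * 2) := by rw [hm]; exact dvd_pow_self _ m.pos.ne'
    exact (Nat.prime_dvd_prime_iff_eq hr' hp').1 (hr'.dvd_of_dvd_pow this)
  subst this
  have := Fact.mk hr'
  exact add_pow_char_pow x y r k

/-- For two distinct columns `α ≠ α'` and any two symbols `γ, δ ∈ T₀`, exactly
`q^(2n-3)` points of `W = F^{n-1} × C` satisfy `F_α(x) = γ` and `F_{α'}(x) = δ`: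
the array `(F_α(x))_{x ∈ W, α ∈ F^{n-1}}` is an `OA(q^{2n-1}, q^{2n-2}, q, 2)`
of index `q^{2n-3}` over the alphabet `T₀`. -/
theorem orthogonal_array_strength_two (q : ℕ) (hq : IsPrimePow q)
    (F : Type*) [Field F] [Fintype F] [DecidableEq F] (hF : Fintype.card F = q ^ 2)
    (a b : F) (ha : a ≠ 0) (hb : b ^ q ≠ b)
    (hab : 4 * a ^ (q + 1) + (b ^ q - b) ^ 2 ≠ 0)
    (C : Finset F) (hC : ∀ x : F, ∃! c : F, c ∈ C ∧ (c - x) ^ q = c - x)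
    (n : ℕ) (hn : 2 ≤ n) (α α' : Fin (n - 1) → F) (hαα' : α ≠ α')
    (γ δ : F) (hγ : γ + γ ^ q = 0) (hδ : δ + δ ^ q = 0) :
    (Finset.univ.filter (fun x : (Fin (n - 1) → F) × F =>
        x.2 ∈ C ∧ Falpha q a b α x = γ ∧ Falpha q a b α' x = δ)).card
      = q ^ (2 * n - 3) := by

  classical
  have hadd := frob_add_aux q hq F hF
  have hqq : ∀ x : F, (x ^ q) ^ q = x := fun x => by
    rw [← pow_mul, ← sq, ← hF, FiniteField.pow_card]
  have hq0 : 0 < q := hq.pos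
  have hneg : ∀ x : F, (-x) ^ q = - x ^ q := fun x => by
    have := hadd x (-x)
    rw [add_neg_cancel, zero_pow hq0.ne'] at this
    linear_combination -this
  have hsub : ∀ x y : F, (x - y) ^ q = x ^ q - y ^ q := fun x y => by
    rw [sub_eq_add_neg, hadd, hneg, sub_eq_add_neg]
  have hsum : ∀ (f : Fin (n-1) → F), (∑ i, f i) ^ q = ∑ i, f i ^ q := fun f => by
    have := map_sum (⟨⟨fun x : F => x ^ q, zero_pow hq0.ne'⟩, hadd⟩ : F →+ F) f Finset.univ
    exact this
  have htwo : (2 : F) ^ q = 2 := by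
    rw [← one_add_one_eq_two, hadd, one_pow]
  obtain ⟨D, hD⟩ : ∃ D, D = b ^ q - b := ⟨_, rfl⟩
  have hD0 : D ≠ 0 := by rw [hD]; exact sub_ne_zero.2 hb
  have hDq : D ^ q = - D := by rw [hD, hsub, hqq]; ring
  let φ : F →+ F := ⟨⟨fun x : F => x ^ q - x, by simp [hq0.ne']⟩, fun x y => by
    change (x+y)^q - (x+y) = _; rw [hadd]; ring⟩
  have hφ : ∀ x, φ x = x ^ q - x := fun x => rfl
  let T : Finset F := Finset.univ.filter (fun u => u + u ^ q = 0)
  have hT : ∀ u, u ∈ T ↔ u + u ^ q = 0 := fun u => by simp [T]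
  have hφT : ∀ x, φ x ∈ T := fun x => by
    rw [hT, hφ, hsub, hqq]; ring
  have hφs : ∀ t ∈ T, ∃ x, φ x = t := fun t ht => by
    rw [hT] at ht
    have ht' : t ^ q = - t := by linear_combination ht
    refine ⟨t / D * b, ?_⟩
    rw [hφ, mul_pow, div_pow, hDq, ht', neg_div_neg_eq, ← mul_sub, ← hD, div_mul_cancel₀ _ hD0]
  have hTcard : T.card = q := by
    have h0 := fiber_card_aux φ T hφT hφs 0 (by rw [hT]; simp [hq0.ne'])
    have : (Finset.univ.filter (fun x => φ x = 0)).card = T.card := by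
      apply Finset.card_bij (fun x _ => x * D)
      · intro x hx
        simp only [Finset.mem_filter, Finset.mem_univ, true_and, hφ, sub_eq_zero] at hx
        rw [hT, mul_pow, hx, hDq]; ring
      · intro x _ y _ h
        exact mul_right_cancel₀ hD0 h
      · intro t ht
        rw [hT] at ht
        have ht' : t ^ q = - t := by linear_combination ht
        refine ⟨t / D, ?_, div_mul_cancel₀ _ hD0⟩
        simp only [Finset.mem_filter, Finset.mem_univ, true_and, hφ, sub_eq_zero]
        rw [div_pow, hDq, ht', neg_div_neg_eq]
    rw [this, hF, ← sq] at h0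
    exact (Nat.pow_left_injective (n := 2) (by norm_num) h0).symm
  obtain ⟨u, hu⟩ : ∃ u : Fin (n-1) → F, u = fun i => 2 * a * (α i - α' i) + D * (α i - α' i) ^ q :=
    ⟨_, rfl⟩
  have huq : ∀ i, u i ^ q = 2 * a ^ q * (α i - α' i) ^ q - D * (α i - α' i) := fun i => by
    rw [hu]; simp only [hadd, mul_pow, hqq, hDq, htwo]; ring
  obtain ⟨j, hj⟩ : ∃ j, u j ≠ 0 := by
    by_contra! hcon
    apply hαα'
    funext i
    have h1 := huq i
    have h2 := hcon i
    rw [h2, zero_pow hq0.ne'] at h1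
    rw [hu] at h2
    simp only at h2
    rw [← hD, pow_succ] at hab
    have : (4 * (a ^ q * a) + D ^ 2) * (α i - α' i) = 0 := by
      linear_combination 2 * a ^ q * h2 + D * h1
    exact sub_eq_zero.1 ((mul_eq_zero.1 this).resolve_left hab)
  let ℓ : (Fin (n-1) → F) →+ F := ⟨⟨fun x => ∑ i, u i * x i, by simp⟩, fun x y => by
    simp [mul_add, Finset.sum_add_distrib]⟩
  have hℓ : ∀ x, ℓ x = ∑ i, u i * x i := fun x => rfl
  have hcount := fiber_card_aux (φ.comp ℓ) T (fun x => hφT _) (fun t ht => by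
    obtain ⟨s, hs⟩ := hφs t ht
    refine ⟨Pi.single j (s / u j), ?_⟩
    rw [AddMonoidHom.comp_apply, hℓ, Finset.sum_eq_single j]
    · rw [Pi.single_eq_same, mul_div_cancel₀ _ hj, hs]
    · intro i _ hi; simp [Pi.single_eq_of_ne hi]
    · simp) (γ - δ) (by rw [hT, hsub]; linear_combination hγ - hδ)
  have hdiff : ∀ x : (Fin (n-1) → F) × F,
      Falpha q a b α x - Falpha q a b α' x = φ (ℓ x.1) := fun x => by
    rw [hφ, hℓ, hsum, ← Finset.sum_sub_distrib]
    unfold Falpha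
    rw [add_sub_add_left_eq_sub, ← Finset.sum_sub_distrib]
    apply Finset.sum_congr rfl
    intro i _
    rw [mul_pow, huq, hu, ← hD]
    simp only [hsub]
    ring
  have hsol : ∀ y : Fin (n-1) → F, ∃! c : F, c ∈ C ∧ Falpha q a b α (y, c) = γ := fun y => by
    obtain ⟨S, hS⟩ : ∃ S, ∀ c, Falpha q a b α (y, c) = c ^ q - c + S := 
      ⟨Falpha q a b α (y, 0), fun c => by unfold Falpha; simp [hq0.ne']⟩
    have hST : S ∈ T := by
      have : S = Falpha q a b α (y, 0) := by rw [hS]; simp [hq0.ne']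
      rw [this, hT]
      unfold Falpha
      simp only [zero_pow hq0.ne', sub_zero, zero_add]
      rw [hsum, ← Finset.sum_add_distrib]
      apply Finset.sum_eq_zero
      intro i _
      rw [← hD]
      have e1 : y i ^ (2 * q) = (y i ^ q) ^ 2 := by rw [mul_comm, pow_mul]
      have e2 : ∀ z : F, (z ^ 2) ^ q = (z ^ q) ^ 2 := fun z => by rw [← pow_mul, mul_comm, pow_mul]
      simp only [e1, pow_succ (y i) q, hsub, hadd, mul_pow, e2, hqq, hDq, htwo]
      ring
    obtain ⟨s, hs⟩ := hφs (γ - S) (by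
      rw [hT] at hST ⊢; rw [hsub]; linear_combination hγ - hST)
    rw [hφ] at hs
    have key : ∀ c, Falpha q a b α (y, c) = γ ↔ (c - s) ^ q = c - s := fun c => by
      rw [hS, hsub]
      constructor
      · intro h; linear_combination h - hs
      · intro h; linear_combination h + hs
    simp only [key]
    exact hC s
  have hcard : (Finset.univ.filter (fun x : (Fin (n - 1) → F) × F =>
        x.2 ∈ C ∧ Falpha q a b α x = γ ∧ Falpha q a b α' x = δ)).card
      = (Finset.univ.filter (fun y => (φ.comp ℓ) y = γ - δ)).card := by
    apply Finset.card_bij (fun x _ => x.1)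
    · intro x hx
      simp only [Finset.mem_filter, Finset.mem_univ, true_and] at hx ⊢
      rw [AddMonoidHom.comp_apply, ← hdiff, hx.2.1, hx.2.2]
    · rintro ⟨x, c⟩ hx ⟨y, d⟩ hy h
      simp only [Finset.mem_filter, Finset.mem_univ, true_and] at hx hy h
      subst h
      rw [(hsol x).unique ⟨hx.1, hx.2.1⟩ ⟨hy.1, hy.2.1⟩]
    · intro y hy
      simp only [Finset.mem_filter, Finset.mem_univ, true_and] at hy
      obtain ⟨c, ⟨hc1, hc2⟩, -⟩ := hsol y
      refine ⟨(y, c), ?_, rfl⟩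
      simp only [Finset.mem_filter, Finset.mem_univ, true_and]
      refine ⟨hc1, hc2, ?_⟩
      have := hdiff (y, c)
      rw [AddMonoidHom.comp_apply] at hy
      simp only [hy, hc2] at this
      linear_combination -this
  rw [hcard]
  rw [hTcard, Fintype.card_fun, hF, Fintype.card_fin, ← pow_mul,
    show 2 * (n - 1) = (2 * n - 3) + 1 by omega, pow_succ'] at hcount
  exact (Nat.eq_of_mul_eq_mul_left hq0 hcount).symm
end

section
/- Let n ≥ 2. For every α ∈ F^{n−1} and every γ ∈ T₀ = {u ∈ F : u + u^q = 0}, the number of points x ∈ W = F^{n−1} × C with F_α(x) = γ equals q^{2n−2}; in particular each symbol of T₀ occurs equally often in each column of the array (F_α(x))_{x ∈ W, α ∈ F^{n−1}}. -/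
/-- Each symbol `γ ∈ T₀` occurs exactly `q^(2n-2)` times in each column of the
array `(F_α(x))_{x ∈ W, α ∈ F^{n-1}}`, where `W = F^{n-1} × C`. -/
theorem column_balance (q : ℕ) (hq : IsPrimePow q)
    (F : Type*) [Field F] [Fintype F] [DecidableEq F] (hF : Fintype.card F = q ^ 2)
    (a b : F) (ha : a ≠ 0) (hb : b ^ q ≠ b)
    (C : Finset F) (hC : ∀ x : F, ∃! c : F, c ∈ C ∧ (c - x) ^ q = c - x)
    (n : ℕ) (hn : 2 ≤ n) (α : Fin (n - 1) → F)
    (γ : F) (hγ : γ + γ ^ q = 0) :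
    (Finset.univ.filter (fun x : (Fin (n - 1) → F) × F =>
        x.2 ∈ C ∧ Falpha q a b α x = γ)).card = q ^ (2 * n - 2) := by
  classical
  have hfr : ∃ φ : F →+* F, ∀ x, φ x = x ^ q := by
    obtain ⟨p, k, hp, hk, rfl⟩ := hq
    have hp' : p.Prime := hp.nat_prime
    have : Fact p.Prime := ⟨hp'⟩
    obtain ⟨r, hr⟩ := CharP.exists F
    obtain ⟨m, hrp, hm⟩ := FiniteField.card F r
    have : r = p := by
      rw [hF, ← pow_mul] at hm
      have h1 : p ∣ r ^ (m : ℕ) := by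
        rw [← hm]; exact dvd_pow_self p (by omega)
      exact ((Nat.prime_dvd_prime_iff_eq hp' hrp).1 (hp'.dvd_of_dvd_pow h1)).symm
    subst this
    exact ⟨iterateFrobenius F r k, fun x => iterateFrobenius_def r k x⟩
  obtain ⟨φ, hφ⟩ := hfr
  have hφφ : ∀ x, φ (φ x) = x := by
    intro x
    rw [hφ, hφ, ← pow_mul, ← sq, ← hF, FiniteField.pow_card]
  have hd : φ b - b ≠ 0 := by rw [hφ]; exact sub_ne_zero.2 hb
  have key : ∀ u : F, u + φ u = 0 → ∃! c : F, c ∈ C ∧ φ c - c = u := by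
    intro u hu
    have hu' : φ u = -u := by linear_combination hu
    have hk : φ (u / (φ b - b)) = u / (φ b - b) := by
      rw [map_div₀, map_sub, hφφ, hu', ← neg_sub (φ b) b, neg_div_neg_eq]
    have hy : φ (b * (u / (φ b - b))) - b * (u / (φ b - b)) = u := by
      rw [map_mul, hk, ← sub_mul]
      field_simp
    have h := hC (b * (u / (φ b - b)))
    have e : ∀ c, (c ∈ C ∧ (c - b * (u / (φ b - b))) ^ q = c - b * (u / (φ b - b))) ↔
        (c ∈ C ∧ φ c - c = u) := by
      intro c
      refine and_congr_right fun _ => ?_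
      rw [← hφ, map_sub]
      constructor
      · intro h; linear_combination h + hy
      · intro h; linear_combination h - hy
    simpa only [e] using h
  have key2 : ∀ y : Fin (n - 1) → F, ∃! c : F, c ∈ C ∧ Falpha q a b α (y, c) = γ := by
    intro y
    obtain ⟨S, hS⟩ : ∃ S, S = ∑ i, (φ a * φ (y i) ^ 2 - a * y i ^ 2
      - (φ b - b) * (φ (y i) * y i)
      + (2 * φ a * φ (α i) - (φ b - b) * α i) * φ (y i)
      - (2 * a * α i + (φ b - b) * φ (α i)) * y i) := ⟨_, rfl⟩
    have hF' : ∀ c, Falpha q a b α (y, c) = φ c - c + S := by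
      intro c
      simp only [Falpha, hS, hφ]
      congr 1
      refine Finset.sum_congr rfl fun i _ => ?_
      ring
    have hS0 : S + φ S = 0 := by
      rw [hS, map_sum, ← Finset.sum_add_distrib]
      refine Finset.sum_eq_zero fun i _ => ?_
      simp only [map_add, map_sub, map_mul, map_pow, hφφ, map_ofNat]
      ring
    have h := key (γ - S) (by
      rw [map_sub, hφ γ]; linear_combination hγ - hS0)
    have e : ∀ c, (c ∈ C ∧ φ c - c = γ - S) ↔ (c ∈ C ∧ Falpha q a b α (y, c) = γ) := by
      intro c
      rw [hF', eq_sub_iff_add_eq]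
    simpa only [e] using h
  have hcard : (Finset.univ.filter (fun x : (Fin (n - 1) → F) × F =>
        x.2 ∈ C ∧ Falpha q a b α x = γ)).card
      = (Finset.univ : Finset (Fin (n - 1) → F)).card := by
    refine Finset.card_bij (fun x _ => x.1) (fun _ _ => Finset.mem_univ _) ?_ ?_
    · rintro ⟨y, c⟩ h ⟨y', c'⟩ h' (rfl : y = y')
      have h1 := (Finset.mem_filter.1 h).2
      have h2 := (Finset.mem_filter.1 h').2
      exact Prod.ext rfl ((key2 y).unique h1 h2)
    · intro y _
      obtain ⟨c, hc, _⟩ := key2 y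
      exact ⟨(y, c), Finset.mem_filter.2 ⟨Finset.mem_univ _, hc⟩, rfl⟩
  rw [hcard, Finset.card_univ, Fintype.card_fun, hF, Fintype.card_fin, ← pow_mul]
  congr 1
  omega
end

section
/- Let n ≥ 2, let α₁,…,α_{n−1} ∈ F be arbitrary, set β_i = (b − b^q)α_i^q − 2aα_i for i = 1,…,n−1, and let α_n ∈ F satisfy α_n^q − α_n + a^q(α₁^{2q}+…+α_{n−1}^{2q}) − a(α₁²+…+α_{n−1}²) = (b^q − b)(α₁^{q+1}+…+α_{n−1}^{q+1}). Define the affine map g : F^n → F^n by g(x₁,…,x_n) = (x₁+α₁, …, x_{n−1}+α_{n−1}, x_n + β₁x₁ + … + β_{n−1}x_{n−1} + α_n). Then F₀(g(x)) = F₀(x) for every x ∈ F^n; in particular g preserves the set of affine points of the Buekenhout–Metz quasi-Hermitian variety B_{a,b}. -/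
/-- The affine equation `F₀` of the Buekenhout–Metz quasi-Hermitian variety
`B_{a,b}`; a point of `F^n` is a pair `(x₁,…,x_{n-1}, x_n)`. -/
def F0 {F : Type*} [Field F] (q : ℕ) {m : ℕ} (a b : F) (x : (Fin m → F) × F) : F :=
  x.2 ^ q - x.2 + ∑ i : Fin m,
    (a ^ q * x.1 i ^ (2 * q) - a * x.1 i ^ 2 - (b ^ q - b) * x.1 i ^ (q + 1))

/-- The affine maps of the group `Ψ` preserve the form `F₀`, hence the affine
part of the BM quasi-Hermitian variety. -/
theorem stabilizer_preserves_variety (q : ℕ) (hq : IsPrimePow q)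
    (F : Type*) [Field F] [Fintype F] (hF : Fintype.card F = q ^ 2)
    (a b : F) (ha : a ≠ 0) (hb : b ^ q ≠ b)
    (n : ℕ) (hn : 2 ≤ n) (α : Fin (n - 1) → F) (αn : F)
    (hαn : αn ^ q - αn + a ^ q * (∑ i, α i ^ (2 * q)) - a * (∑ i, α i ^ 2)
        = (b ^ q - b) * ∑ i, α i ^ (q + 1)) :
    ∀ x : (Fin (n - 1) → F) × F,
      F0 q a b (fun i => x.1 i + α i,
        x.2 + (∑ i, ((b - b ^ q) * α i ^ q - 2 * a * α i) * x.1 i) + αn)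
      = F0 q a b x := by
  obtain ⟨p, k, hp, hk, hpk⟩ := hq
  have hpp : p.Prime := Nat.prime_iff.mpr hp
  haveI : Fact p.Prime := ⟨hpp⟩
  haveI : CharP F p := by
    obtain ⟨r, hr⟩ := CharP.exists F
    obtain ⟨m, hrp, hc⟩ := FiniteField.card F r
    have h1 : r ∣ p := by
      have h2 : r ∣ (p ^ k) ^ 2 := by
        rw [hpk, ← hF, hc]
        exact dvd_pow_self r m.pos.ne'
      exact hrp.dvd_of_dvd_pow (hrp.dvd_of_dvd_pow h2)
    rwa [(Nat.prime_dvd_prime_iff_eq hrp hpp).mp h1] at hr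
  obtain ⟨σ, hσ⟩ : ∃ σ : F →+* F, ∀ x, x ^ q = σ x :=
    ⟨iterateFrobenius F p k, fun x => by rw [iterateFrobenius_def, hpk]⟩
  have hσσ : ∀ x, σ (σ x) = x := fun x => by
    rw [← hσ, ← hσ, ← pow_mul, ← sq, ← hF, FiniteField.pow_card]
  have h2 : ∀ x : F, x ^ (2 * q) = σ x ^ 2 := fun x => by rw [mul_comm, pow_mul, hσ]
  have h3 : ∀ x : F, x ^ (q + 1) = σ x * x := fun x => by rw [pow_succ, hσ]
  rintro ⟨x, y⟩
  simp only [F0]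
  simp only [h2, h3, hσ] at hαn ⊢
  simp only [map_add, map_sum, map_mul, map_sub, hσσ, map_ofNat]
  have key : ∑ i, (σ a * (σ (x i) + σ (α i)) ^ 2 - a * (x i + α i) ^ 2
        - (σ b - b) * ((σ (x i) + σ (α i)) * (x i + α i)))
      = ∑ i, (σ a * σ (x i) ^ 2 - a * x i ^ 2 - (σ b - b) * (σ (x i) * x i))
        + (σ a * ∑ i, σ (α i) ^ 2 - a * ∑ i, α i ^ 2 - (σ b - b) * ∑ i, σ (α i) * α i)
        - ∑ i, ((σ b - b) * α i - 2 * σ a * σ (α i)) * σ (x i)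
        + ∑ i, ((b - σ b) * σ (α i) - 2 * a * α i) * x i := by
    simp only [Finset.mul_sum, ← Finset.sum_add_distrib, ← Finset.sum_sub_distrib]
    refine Finset.sum_congr rfl fun i _ => ?_
    ring
  rw [key]
  linear_combination hαn
end

section
/- Let n ≥ 2 and let P, P' ∈ F^n with F₀(P) = 0 and F₀(P') = 0. Then there is a unique tuple (α₁,…,α_n) ∈ F^n satisfying α_n^q − α_n + a^q(α₁^{2q}+…+α_{n−1}^{2q}) − a(α₁²+…+α_{n−1}²) = (b^q − b)(α₁^{q+1}+…+α_{n−1}^{q+1}) such that the affine map g(x₁,…,x_n) = (x₁+α₁, …, x_{n−1}+α_{n−1}, x_n + β₁x₁ + … + β_{n−1}x_{n−1} + α_n), with β_i = (b − b^q)α_i^q − 2aα_i, maps P to P'. In other words, the stabilizer Ψ of B_{a,b} (a group of order q^{2n−1}) acts sharply transitively on the affine points of B_{a,b}. -/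
theorem exists_frob (q : ℕ) (hq : IsPrimePow q)
    (F : Type*) [Field F] [Fintype F] (hF : Fintype.card F = q ^ 2) :
    ∃ φ : F →+* F, ∀ x, φ x = x ^ q := by
  obtain ⟨p, k, hp, hk, rfl⟩ := hq
  have hp' : p.Prime := hp.nat_prime
  obtain ⟨r, hr⟩ := CharP.exists F
  obtain ⟨m, hrp, hm⟩ := FiniteField.card F r
  have hrp' : r ∣ (p ^ k) ^ 2 := by
    rw [← hF, hm]
    exact dvd_pow_self r m.pos.ne'
  have h1 : r = p :=
    (Nat.prime_dvd_prime_iff_eq hrp hp').1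
      (hrp.dvd_of_dvd_pow (hrp.dvd_of_dvd_pow hrp'))
  subst h1
  haveI : Fact r.Prime := ⟨hp'⟩
  exact ⟨iterateFrobenius F r k, fun x => iterateFrobenius_def r k x⟩

/-- The stabilizer `Ψ` acts sharply transitively on the affine points of
`B_{a,b}`: for any two affine points `P, P'` of the variety there is a unique
tuple `(α₁,…,α_n)` satisfying the `Ψ`-condition whose associated affine map
sends `P` to `P'`. -/
theorem sharply_transitive (q : ℕ) (hq : IsPrimePow q)
    (F : Type*) [Field F] [Fintype F] (hF : Fintype.card F = q ^ 2)
    (a b : F) (ha : a ≠ 0) (hb : b ^ q ≠ b)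
    (n : ℕ) (hn : 2 ≤ n) (P P' : (Fin (n - 1) → F) × F)
    (hP : F0 q a b P = 0) (hP' : F0 q a b P' = 0) :
    ∃! αp : (Fin (n - 1) → F) × F,
      (αp.2 ^ q - αp.2 + a ^ q * (∑ i, αp.1 i ^ (2 * q)) - a * (∑ i, αp.1 i ^ 2)
          = (b ^ q - b) * ∑ i, αp.1 i ^ (q + 1)) ∧
      (fun i => P.1 i + αp.1 i) = P'.1 ∧
      P.2 + (∑ i, ((b - b ^ q) * αp.1 i ^ q - 2 * a * αp.1 i) * P.1 i) + αp.2
        = P'.2 := by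
  obtain ⟨φ, hφ⟩ := exists_frob q hq F hF
  have hφφ : ∀ x, φ (φ x) = x := by
    intro x
    rw [hφ, hφ, ← pow_mul, ← sq, ← hF, FiniteField.pow_card]
  obtain ⟨x, xn⟩ := P
  obtain ⟨y, yn⟩ := P'
  have h2 : ∀ z : F, z ^ (2 * q) = φ z ^ 2 := fun z => by rw [hφ, ← pow_mul, mul_comm]
  have h3 : ∀ z : F, z ^ (q + 1) = φ z * z := fun z => by rw [hφ, pow_succ]
  simp only [F0, h2, h3, ← hφ] at hP hP' ⊢
  refine ⟨(fun i => y i - x i, yn - xn - ∑ i, ((b - φ b) * φ (y i - x i)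
    - 2 * a * (y i - x i)) * x i), ⟨?_, ?_, ?_⟩, ?_⟩
  · have key : φ yn - yn - (φ xn - xn) =
        (∑ i, (φ a * φ (x i) ^ 2 - a * x i ^ 2 - (φ b - b) * (φ (x i) * x i)))
        - ∑ i, (φ a * φ (y i) ^ 2 - a * y i ^ 2 - (φ b - b) * (φ (y i) * y i)) := by
      linear_combination hP' - hP
    rw [← sub_eq_zero]
    have h4 : φ yn - φ xn = yn - xn + ((∑ i, (φ a * φ (x i) ^ 2 - a * x i ^ 2
        - (φ b - b) * (φ (x i) * x i)))
        - ∑ i, (φ a * φ (y i) ^ 2 - a * y i ^ 2 - (φ b - b) * (φ (y i) * y i))) := by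
      linear_combination key
    simp only [map_sub, map_sum, map_mul, hφφ, map_ofNat]
    rw [h4]
    have h5 : (∑ i, (φ a * φ (x i) ^ 2 - a * x i ^ 2 - (φ b - b) * (φ (x i) * x i)))
        - (∑ i, (φ a * φ (y i) ^ 2 - a * y i ^ 2 - (φ b - b) * (φ (y i) * y i)))
        - (∑ i, ((φ b - b) * (y i - x i) - 2 * φ a * (φ (y i) - φ (x i))) * φ (x i))
        + (∑ i, ((b - φ b) * (φ (y i) - φ (x i)) - 2 * a * (y i - x i)) * x i)
        + φ a * (∑ i, (φ (y i) - φ (x i)) ^ 2) - a * (∑ i, (y i - x i) ^ 2)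
        - (φ b - b) * (∑ i, (φ (y i) - φ (x i)) * (y i - x i)) = 0 := by
      simp only [Finset.mul_sum, ← Finset.sum_sub_distrib, ← Finset.sum_add_distrib]
      apply Finset.sum_eq_zero
      intro i _
      ring
    linear_combination h5
  · funext i
    simp
  · simp only
    ring
  · rintro ⟨α, αn⟩ ⟨_, hα, hn'⟩
    have e : α = fun i => y i - x i := by
      funext i
      have := congrFun hα i
      simp only at this
      rw [← this]
      ring
    subst e
    simp only at hn'
    refine Prod.ext rfl ?_
    simp only
    rw [← hn']
    ring
end

section
/- Let ε ∈ F \ K and let t₁, t₂, t₃, t₄, t₅ be five pairwise distinct elements of K. Then the 5×5 matrix over F whose j-th row is (1, t_j + εt_j², t_j³ + εt_j⁴, (t_j + εt_j²)^q, (t_j³ + εt_j⁴)^q) has nonzero determinant. In particular the set Ω = {(t + εt², t³ + εt⁴) : t ∈ K} of q pairs satisfies condition (luc1): any five of its elements give a nonsingular matrix of this form. -/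
/-- Any five distinct points of the twisted-quartic-type set
`Ω = {(t + εt², t³ + εt⁴) : t ∈ K}` give a nonsingular 5×5 matrix of the form
required by condition (luc1). -/
theorem omega_condition_luc1 (q : ℕ) (hq : IsPrimePow q)
    (F : Type*) [Field F] [Fintype F] (hF : Fintype.card F = q ^ 2)
    (ε : F) (hε : ε ^ q ≠ ε)
    (t : Fin 5 → F) (ht : ∀ j, (t j) ^ q = t j) (htinj : Function.Injective t) :
    (Matrix.of (fun j : Fin 5 =>
      ![(1 : F), t j + ε * t j ^ 2, t j ^ 3 + ε * t j ^ 4,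
        (t j + ε * t j ^ 2) ^ q, (t j ^ 3 + ε * t j ^ 4) ^ q])).det ≠ 0 := by
  obtain ⟨p, k, hp, hk, rfl⟩ := hq
  have hp' : p.Prime := hp.nat_prime
  have : Fact p.Prime := ⟨hp'⟩
  have : CharP F p := by
    have h0 : (p : F) = 0 := by
      have h : ((Fintype.card F : ℕ) : F) = 0 := FiniteField.cast_card_eq_zero F
      rw [hF] at h
      push_cast at h
      exact eq_zero_of_pow_eq_zero (eq_zero_of_pow_eq_zero h)
    exact (CharP.charP_iff_prime_eq_zero hp').2 h0
  have key : (Matrix.of (fun j : Fin 5 =>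
      ![(1 : F), t j + ε * t j ^ 2, t j ^ 3 + ε * t j ^ 4,
        (t j + ε * t j ^ 2) ^ (p ^ k), (t j ^ 3 + ε * t j ^ 4) ^ (p ^ k)]))
      = Matrix.vandermonde t * !![1, 0, 0, 0, 0; 0, 1, 0, 1, 0; 0, ε, 0, ε ^ (p ^ k), 0;
          0, 0, 1, 0, 1; 0, 0, ε, 0, ε ^ (p ^ k)] := by
    have hc : ∀ j (n : ℕ), (t j ^ n) ^ (p ^ k) = t j ^ n := fun j n => by
      rw [← pow_mul, mul_comm, pow_mul, ht]
    ext i j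
    rw [Matrix.mul_apply]
    fin_cases j <;>
      simp [Fin.sum_univ_five, Matrix.vandermonde_apply, add_pow_char_pow, mul_pow, hc, ht, mul_comm]
  rw [key, Matrix.det_mul]
  refine mul_ne_zero (Matrix.det_vandermonde_ne_zero_iff.2 htinj) ?_
  have hd : (!![1, 0, 0, 0, 0; 0, 1, 0, 1, 0; 0, ε, 0, ε ^ (p ^ k), 0;
          0, 0, 1, 0, 1; 0, 0, ε, 0, ε ^ (p ^ k)] : Matrix (Fin 5) (Fin 5) F).det
      = - (ε ^ (p ^ k) - ε) ^ 2 := by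
    generalize ε ^ (p ^ k) = δ
    simp [Matrix.det_succ_row_zero, Fin.sum_univ_succ, Fin.succAbove]
    ring
  rw [hd]
  exact neg_ne_zero.2 (pow_ne_zero 2 (sub_ne_zero.2 hε))
end

section
/- Let ε ∈ F \ K, and for j = 1,…,5 let u_j = u_{j,0} + ε u_{j,1} and v_j = v_{j,0} + ε v_{j,1} with u_{j,0}, u_{j,1}, v_{j,0}, v_{j,1} ∈ K. Then the 5×5 matrix over F with rows (1, u_j, v_j, u_j^q, v_j^q) has nonzero determinant if and only if the 5×5 matrix over K with rows (1, u_{j,0}, v_{j,0}, u_{j,1}, v_{j,1}) has nonzero determinant. (Thus condition (luc1) is equivalent to the five coordinate vectors forming an arc-type configuration in AG(4,q).) -/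
/-- Writing `u_j = u_{j,0} + ε u_{j,1}`, `v_j = v_{j,0} + ε v_{j,1}` in the basis
`(1, ε)` of `F` over `K`, the matrix with rows `(1, u_j, v_j, u_j^q, v_j^q)` is
nonsingular iff the matrix with rows `(1, u_{j,0}, v_{j,0}, u_{j,1}, v_{j,1})`
is nonsingular. -/
theorem luc1_equiv_arc (q : ℕ) (hq : IsPrimePow q)
    (F : Type*) [Field F] [Fintype F] (hF : Fintype.card F = q ^ 2)
    (ε : F) (hε : ε ^ q ≠ ε)
    (u0 u1 v0 v1 : Fin 5 → F)
    (hu0 : ∀ j, (u0 j) ^ q = u0 j) (hu1 : ∀ j, (u1 j) ^ q = u1 j)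
    (hv0 : ∀ j, (v0 j) ^ q = v0 j) (hv1 : ∀ j, (v1 j) ^ q = v1 j) :
    (Matrix.of (fun j : Fin 5 =>
      ![(1 : F), u0 j + ε * u1 j, v0 j + ε * v1 j,
        (u0 j + ε * u1 j) ^ q, (v0 j + ε * v1 j) ^ q])).det ≠ 0 ↔
    (Matrix.of (fun j : Fin 5 =>
      ![(1 : F), u0 j, v0 j, u1 j, v1 j])).det ≠ 0 := by
  classical
  have hadd : ∀ a b : F, (a + b) ^ q = a ^ q + b ^ q := by
    obtain ⟨p, k, hp, hk, rfl⟩ := hq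
    have hp' : p.Prime := hp.nat_prime
    obtain ⟨r, hr⟩ := CharP.exists F
    obtain ⟨n, hrp, hc⟩ := FiniteField.card F r
    have hpr : p = r := by
      have h1 : p ∣ r ^ (n : ℕ) := by
        rw [← hc, hF, ← pow_mul]
        exact dvd_pow_self p (by omega)
      exact (Nat.prime_dvd_prime_iff_eq hp' hrp).1 (hp'.dvd_of_dvd_pow h1)
    subst hpr
    haveI : Fact p.Prime := ⟨hp'⟩
    intro a b
    exact add_pow_char_pow a b p k
  have hM : (Matrix.of (fun j : Fin 5 =>
      ![(1 : F), u0 j + ε * u1 j, v0 j + ε * v1 j,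
        (u0 j + ε * u1 j) ^ q, (v0 j + ε * v1 j) ^ q])) =
      (Matrix.of (fun j : Fin 5 => ![(1 : F), u0 j, v0 j, u1 j, v1 j])) *
      !![1, 0, 0, 0, 0;
         0, 1, 0, 1, 0;
         0, 0, 1, 0, 1;
         0, ε, 0, ε ^ q, 0;
         0, 0, ε, 0, ε ^ q] := by
    ext i j
    rw [Matrix.mul_apply, Fin.sum_univ_five]
    fin_cases j <;> simp [hadd, mul_pow, hu0, hu1, hv0, hv1, mul_comm]
  have hT : (!![1, 0, 0, 0, 0;
         0, 1, 0, 1, 0;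
         0, 0, 1, 0, 1;
         0, ε, 0, ε ^ q, 0;
         0, 0, ε, 0, ε ^ q] : Matrix (Fin 5) (Fin 5) F).det = (ε ^ q - ε) ^ 2 := by
    generalize ε ^ q = e
    simp [Matrix.det_succ_row_zero, Fin.sum_univ_succ, Fin.succAbove]
    ring
  rw [hM, Matrix.det_mul, hT]
  have h0 : (ε ^ q - ε) ^ 2 ≠ 0 := pow_ne_zero 2 (sub_ne_zero.2 hε)
  simp only [ne_eq, mul_eq_zero, h0, or_false]
end

section
/- Let n = 3, let λ ∈ K and (x,y,z) ∈ W = F² × C. Then there exists z' ∈ C such that for every ω = (ω₁,ω₂) ∈ F² one has λ·F_ω(x,y,z) = F_ω(λx, λy, z'). In particular the code {(F_ω(P))_{ω} : P ∈ W} is closed under scalar multiplication by elements of K, and hence is K-linear. -/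
/-- The affine form `F_ω` (case `n = 3`) associated to `ω = (ω₁, ω₂) ∈ F²`. -/
def Fw {F : Type*} [Field F] (q : ℕ) (a b ω₁ ω₂ x y z : F) : F :=
  z ^ q - z + a ^ q * (x ^ (2 * q) + y ^ (2 * q)) - a * (x ^ 2 + y ^ 2)
    - (b ^ q - b) * (x ^ (q + 1) + y ^ (q + 1))
    + (2 * a ^ q * ω₁ ^ q - (b ^ q - b) * ω₁) * x ^ q
    + (2 * a ^ q * ω₂ ^ q - (b ^ q - b) * ω₂) * y ^ q
    - (2 * a * ω₁ + (b ^ q - b) * ω₁ ^ q) * x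
    - (2 * a * ω₂ + (b ^ q - b) * ω₂ ^ q) * y

/-- `K`-homogeneity of the evaluation code: for `λ ∈ K` and a point of
`W = F² × C`, the scalar multiple `λ·F_ω(x,y,z)` is the value of `F_ω` at
another point of `W`, simultaneously for all `ω`; hence the code is K-linear. -/
theorem code_closed_under_scalars (q : ℕ) (hq : IsPrimePow q)
    (F : Type*) [Field F] [Fintype F] (hF : Fintype.card F = q ^ 2)
    (a b : F) (ha : a ≠ 0) (hb : b ^ q ≠ b)
    (C : Finset F) (hC : ∀ x : F, ∃! c : F, c ∈ C ∧ (c - x) ^ q = c - x)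
    (lam : F) (hlam : lam ^ q = lam)
    (x y z : F) (hz : z ∈ C) :
    ∃ z' ∈ C, ∀ ω₁ ω₂ : F,
      lam * Fw q a b ω₁ ω₂ x y z = Fw q a b ω₁ ω₂ (lam * x) (lam * y) z' := by
  obtain ⟨p, k, hp, hk, rfl⟩ := hq
  have hp' : p.Prime := hp.nat_prime
  obtain ⟨r, hr⟩ := CharP.exists F
  obtain ⟨n, hrp, hcard⟩ := FiniteField.card F r
  have hrpp : r = p := by
    have h1 : r ∣ p ^ k := by
      have h2 : r ∣ (p ^ k) ^ 2 := by
        rw [← hF, hcard]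
        exact dvd_pow_self r n.ne_zero
      exact hrp.dvd_of_dvd_pow h2
    exact (Nat.prime_dvd_prime_iff_eq hrp hp').1 (hrp.dvd_of_dvd_pow h1)
  subst hrpp
  have : Fact r.Prime := ⟨hrp⟩
  have hadd : ∀ u v : F, (u + v) ^ r ^ k = u ^ r ^ k + v ^ r ^ k :=
    fun u v => add_pow_char_pow u v r k
  have hsub : ∀ u v : F, (u - v) ^ r ^ k = u ^ r ^ k - v ^ r ^ k :=
    fun u v => sub_pow_char_pow u v k
  have hqq : ∀ u : F, (u ^ r ^ k) ^ r ^ k = u := by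
    intro u
    rw [← pow_mul, ← sq, ← hF]
    exact FiniteField.pow_card u
  generalize r ^ k = q at *
  obtain ⟨z', ⟨hz', hK⟩, -⟩ := hC (lam * z + (lam - lam ^ 2) *
    (a * (x ^ 2 + y ^ 2) - b * (x ^ q * x + y ^ q * y)))
  refine ⟨z', hz', fun ω₁ ω₂ => ?_⟩
  have h2 : ∀ u : F, (u ^ 2) ^ q = (u ^ q) ^ 2 := fun u => by rw [← pow_mul, ← pow_mul, mul_comm]
  have h3 : ∀ u : F, u ^ (2 * q) = (u ^ q) ^ 2 := fun u => by rw [← pow_mul, mul_comm]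
  simp only [hsub, hadd, mul_pow, h2, hqq, hlam] at hK
  simp only [Fw, h3, pow_succ _ q, mul_pow, hlam]
  linear_combination -hK
end

section
/- Assume 4a^{q+1} + (b^q − b)² ≠ 0. If c ∈ F is such that ((b − b^q)α^q − 2aα)·c ∈ K for every α ∈ F, then c = 0. (Equivalently, the K-linear map α ↦ (b − b^q)α^q − 2aα on F is bijective, so its image times a nonzero c cannot be contained in K.) -/
/-- If `((b - b^q)α^q - 2aα)·c` lies in the subfield `K` for every `α ∈ F`,
then `c = 0`. -/
theorem separating_coefficients (q : ℕ) (hq : IsPrimePow q)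
    (F : Type*) [Field F] [Fintype F] (hF : Fintype.card F = q ^ 2)
    (a b : F) (ha : a ≠ 0) (hb : b ^ q ≠ b)
    (hab : 4 * a ^ (q + 1) + (b ^ q - b) ^ 2 ≠ 0)
    (c : F)
    (hc : ∀ α : F, (((b - b ^ q) * α ^ q - 2 * a * α) * c) ^ q
        = ((b - b ^ q) * α ^ q - 2 * a * α) * c) :
    c = 0 := by
  have hinv : ∀ x : F, (x ^ q) ^ q = x := by
    intro x
    rw [← pow_mul, ← sq, ← hF, FiniteField.pow_card]
  obtain ⟨σ, hσ⟩ : ∃ σ : F →+* F, ∀ x, σ x = x ^ q := by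
    obtain ⟨p, n, hp, hn, rfl⟩ := hq
    have hp' : p.Prime := hp.nat_prime
    haveI : Fact p.Prime := ⟨hp'⟩
    have hchar : CharP F p := by
      obtain ⟨r, hr⟩ := CharP.exists F
      obtain ⟨m, hrp, hm⟩ := FiniteField.card F r
      have h1 : r ∣ (p ^ n) ^ 2 := by
        rw [← hF, hm]
        exact dvd_pow_self r m.ne_zero
      have h2 : r = p :=
        (Nat.prime_dvd_prime_iff_eq hrp hp').1
          (hrp.dvd_of_dvd_pow (hrp.dvd_of_dvd_pow h1))
      exact h2 ▸ hr
    exact ⟨iterateFrobenius F p n, fun x => iterateFrobenius_def p n x⟩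
  have hσσ : ∀ x, σ (σ x) = x := fun x => by rw [hσ, hσ, hinv]
  rw [pow_succ] at hab
  simp only [← hσ] at hc hab hb
  simp only [map_mul, map_sub, hσσ, map_ofNat] at hc
  have h1 := hc 1
  have h2 := hc b
  simp only [map_one] at h1
  have hB : (b - σ b) * c + 2 * σ a * σ c = 0 := by
    have : (σ b - b) * ((b - σ b) * c + 2 * σ a * σ c) = 0 := by
      linear_combination b * h1 - h2
    exact (mul_eq_zero.1 this).resolve_left (sub_ne_zero.2 hb)
  have : (4 * (σ a * a) + (σ b - b) ^ 2) * c = 0 := by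
    linear_combination (b - σ b) * hB + 2 * σ a * (h1 + hB)
  exact (mul_eq_zero.1 this).resolve_left hab
end

section
/- Suppose q > 4. For t ∈ K set ω(t) = (t + εt², t³ + εt⁴) and θ = ε^q − ε (so θ ≠ 0 and T₀ = θ·K). Then: (i) for each P ∈ W there is a unique polynomial f_P ∈ F[t] of degree at most 4 such that f_P(t) = θ^{−1}·F_{ω(t)}(P) for all t ∈ K; (ii) every coefficient of f_P lies in K; and (iii) the map P ↦ f_P is a bijection from W onto the set of all polynomials of degree at most 4 with coefficients in K. Consequently the code {(θ^{−1}F_{ω(t)}(P))_{t ∈ K} : P ∈ W} equals the extended Reed–Solomon code {(f(t))_{t ∈ K} : f ∈ K[t], deg f ≤ 4}, a [q, 5, q−4] MDS code over K. -/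
open Polynomial in
theorem ers_poly_uniq {F : Type*} [Field F] (S : Finset F) (hS : 4 < S.card) (f g : Polynomial F)
    (hf : f.degree ≤ 4) (hg : g.degree ≤ 4) (h : ∀ t ∈ S, f.eval t = g.eval t) : f = g := by
  have hlt : (4 : WithBot ℕ) < (S.card : WithBot ℕ) := by exact_mod_cast hS
  exact Polynomial.eq_of_degrees_lt_of_eval_finset_eq S (lt_of_le_of_lt hf hlt)
    (lt_of_le_of_lt hg hlt) h

open Polynomial in
noncomputable def ersPoly {F : Type*} [Field F] (c0 c1 c2 c3 c4 : F) : Polynomial F :=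
  C c0 + C c1 * X + C c2 * X ^ 2 + C c3 * X ^ 3 + C c4 * X ^ 4

open Polynomial in
theorem ersPoly_degree {F : Type*} [Field F] (c0 c1 c2 c3 c4 : F) :
    (ersPoly c0 c1 c2 c3 c4).degree ≤ 4 := by
  unfold ersPoly
  compute_degree!

open Polynomial in
theorem ersPoly_eval {F : Type*} [Field F] (c0 c1 c2 c3 c4 t : F) :
    (ersPoly c0 c1 c2 c3 c4).eval t = c0 + c1 * t + c2 * t ^ 2 + c3 * t ^ 3 + c4 * t ^ 4 := by
  simp [ersPoly]

open Polynomial in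
theorem ersPoly_coeff {F : Type*} [Field F] (c0 c1 c2 c3 c4 : F) :
    (ersPoly c0 c1 c2 c3 c4).coeff 0 = c0 ∧ (ersPoly c0 c1 c2 c3 c4).coeff 1 = c1 ∧
    (ersPoly c0 c1 c2 c3 c4).coeff 2 = c2 ∧ (ersPoly c0 c1 c2 c3 c4).coeff 3 = c3 ∧
    (ersPoly c0 c1 c2 c3 c4).coeff 4 = c4 := by
  refine ⟨?_, ?_, ?_, ?_, ?_⟩ <;> simp [ersPoly, coeff_X, coeff_X_pow, coeff_C]

theorem ers_coeff_big {F : Type*} [Field F] (f : Polynomial F) (hf : f.degree ≤ 4) (i : ℕ)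
    (hi : 4 < i) : f.coeff i = 0 := by
  apply Polynomial.coeff_eq_zero_of_degree_lt
  exact lt_of_le_of_lt hf (by exact_mod_cast hi)

theorem ersPoly_eta {F : Type*} [Field F] (f : Polynomial F) (hf : f.degree ≤ 4) :
    f = ersPoly (f.coeff 0) (f.coeff 1) (f.coeff 2) (f.coeff 3) (f.coeff 4) := by
  ext i
  obtain ⟨h0, h1, h2, h3, h4⟩ :=
    ersPoly_coeff (f.coeff 0) (f.coeff 1) (f.coeff 2) (f.coeff 3) (f.coeff 4)
  by_cases hi : 4 < i
  · rw [ers_coeff_big f hf i hi, ers_coeff_big _ (ersPoly_degree _ _ _ _ _) i hi]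
  · have : i ≤ 4 := by omega
    interval_cases i <;> simp_all

theorem ers_frob (q : ℕ) (hq : IsPrimePow q) (F : Type*) [Field F] [Fintype F]
    (hF : Fintype.card F = q ^ 2) : ∃ σ : F →+* F, ∀ x, σ x = x ^ q := by
  obtain ⟨p, n, hp, hn, rfl⟩ := hq
  have hp' : p.Prime := hp.nat_prime
  have : Fact p.Prime := ⟨hp'⟩
  obtain ⟨m, hm, hc⟩ := FiniteField.card F (ringChar F)
  have hdvd : ringChar F ∣ p := by
    have : ringChar F ∣ (p ^ n) ^ 2 := by
      rw [← hF, hc]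
      exact dvd_pow_self _ m.ne_zero
    exact hm.dvd_of_dvd_pow (hm.dvd_of_dvd_pow this)
  have he : ringChar F = p := (Nat.prime_dvd_prime_iff_eq hm hp').1 hdvd
  have : CharP F p := he ▸ ringChar.charP F
  exact ⟨iterateFrobenius F p n, fun x => iterateFrobenius_def p n x⟩

/-- The code polynomial attached to a point. -/
noncomputable def ersP {F : Type*} [Field F] (σ : F →+* F) (a b ε x y z : F) : Polynomial F :=
  let β := σ b - b
  let θ := σ ε - ε
  let u := 2 * σ a * σ x - β * x
  let v := 2 * σ a * σ y - β * y
  ersPoly (θ⁻¹ * (σ z - z + σ a * (σ x ^ 2 + σ y ^ 2) - a * (x ^ 2 + y ^ 2)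
      - β * (σ x * x + σ y * y)))
    (θ⁻¹ * (u - σ u)) (θ⁻¹ * (σ ε * u - ε * σ u))
    (θ⁻¹ * (v - σ v)) (θ⁻¹ * (σ ε * v - ε * σ v))

theorem ersP_eval {F : Type*} [Field F] (q : ℕ) (σ : F →+* F) (hσ : ∀ x, σ x = x ^ q)
    (hσσ : ∀ x, σ (σ x) = x) (a b ε x y z t : F) (ht : t ^ q = t) :
    (ersP σ a b ε x y z).eval t = (ε ^ q - ε)⁻¹ *
      Fw q a b (t + ε * t ^ 2) (t ^ 3 + ε * t ^ 4) x y z := by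
  have h2 (w : F) : w ^ (2 * q) = σ w ^ 2 := by rw [hσ, mul_comm, pow_mul]
  have h1 (w : F) : w ^ (q + 1) = σ w * w := by rw [hσ, pow_succ]
  have ht' : σ t = t := by rw [hσ, ht]
  have hn2 : σ 2 = 2 := map_ofNat σ 2
  simp only [ersP, ersPoly_eval, Fw, h1, h2, ← hσ]
  simp only [map_add, map_sub, map_mul, map_pow, ht', hσσ, hn2]
  ring

theorem ersP_coeff {F : Type*} [Field F] (σ : F →+* F)
    (hσσ : ∀ x, σ (σ x) = x) (a b ε x y z : F) (i : ℕ) :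
    σ ((ersP σ a b ε x y z).coeff i) = (ersP σ a b ε x y z).coeff i := by
  by_cases hi : 4 < i
  · rw [ers_coeff_big (ersP σ a b ε x y z) (ersPoly_degree _ _ _ _ _) i hi, map_zero]
  have hi' : i ≤ 4 := by omega
  have hn2 : σ 2 = 2 := map_ofNat σ 2
  have hneg (w : F) (hw : σ w = -w) : σ ((σ ε - ε)⁻¹ * w) = (σ ε - ε)⁻¹ * w := by
    rw [map_mul, map_inv₀, hw, map_sub, hσσ, ← neg_sub (σ ε) ε, inv_neg]; ring
  obtain ⟨h0, h1, h2, h3, h4⟩ := ersPoly_coeff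
    ((σ ε - ε)⁻¹ * (σ z - z + σ a * (σ x ^ 2 + σ y ^ 2) - a * (x ^ 2 + y ^ 2)
      - (σ b - b) * (σ x * x + σ y * y)))
    ((σ ε - ε)⁻¹ * ((2 * σ a * σ x - (σ b - b) * x) - σ (2 * σ a * σ x - (σ b - b) * x)))
    ((σ ε - ε)⁻¹ * (σ ε * (2 * σ a * σ x - (σ b - b) * x)
      - ε * σ (2 * σ a * σ x - (σ b - b) * x)))
    ((σ ε - ε)⁻¹ * ((2 * σ a * σ y - (σ b - b) * y) - σ (2 * σ a * σ y - (σ b - b) * y)))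
    ((σ ε - ε)⁻¹ * (σ ε * (2 * σ a * σ y - (σ b - b) * y)
      - ε * σ (2 * σ a * σ y - (σ b - b) * y)))
  unfold ersP
  interval_cases i
  · simp only [h0]
    apply hneg
    simp only [map_add, map_sub, map_mul, map_pow, hσσ]
    ring
  · simp only [h1]
    apply hneg
    simp only [map_sub, hσσ]
    ring
  · simp only [h2]
    apply hneg
    simp only [map_sub, map_mul, hσσ]
    ring
  · simp only [h3]
    apply hneg
    simp only [map_sub, hσσ]
    ring
  · simp only [h4]
    apply hneg
    simp only [map_sub, map_mul, hσσ]
    ring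

theorem ers_u {F : Type*} [Field F] (σ : F →+* F) (ε u c1 c2 : F) (hθ : σ ε - ε ≠ 0)
    (hc1 : σ c1 = c1) (hc2 : σ c2 = c2) :
    (c1 = (σ ε - ε)⁻¹ * (u - σ u) ∧ c2 = (σ ε - ε)⁻¹ * (σ ε * u - ε * σ u)) ↔
      u = c2 - ε * c1 := by
  constructor
  · rintro ⟨h1, h2⟩
    rw [h1, h2]
    field_simp
    ring
  · intro h
    have hs : σ u = c2 - σ ε * c1 := by rw [h, map_sub, map_mul, hc1, hc2]
    rw [hs, h]
    constructor <;> field_simp <;> ring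

theorem ers_L {F : Type*} [Field F] (σ : F →+* F) (hσσ : ∀ x, σ (σ x) = x) (a b x u : F)
    (hD : 4 * (σ a * a) + (σ b - b) ^ 2 ≠ 0) :
    2 * σ a * σ x - (σ b - b) * x = u ↔
      x = (4 * (σ a * a) + (σ b - b) ^ 2)⁻¹ * (2 * σ a * σ u - (σ b - b) * u) := by
  have hn2 : σ 2 = 2 := map_ofNat σ 2
  have hn4 : σ 4 = 4 := map_ofNat σ 4
  constructor
  · intro h
    rw [eq_inv_mul_iff_mul_eq₀ hD, ← h]
    simp only [map_sub, map_mul, hσσ, hn2]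
    ring
  · intro h
    have hDσ : σ (4 * (σ a * a) + (σ b - b) ^ 2) = 4 * (σ a * a) + (σ b - b) ^ 2 := by
      simp only [map_add, map_sub, map_mul, map_pow, hσσ, hn4]; ring
    have hs : σ x = (4 * (σ a * a) + (σ b - b) ^ 2)⁻¹ * (2 * a * u + (σ b - b) * σ u) := by
      rw [h, map_mul, map_inv₀, hDσ]
      simp only [map_sub, map_mul, hσσ, hn2]; ring
    rw [hs, h]
    linear_combination u * (inv_mul_cancel₀ hD)

theorem ersPoly_inj {F : Type*} [Field F] (c0 c1 c2 c3 c4 d0 d1 d2 d3 d4 : F) :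
    ersPoly c0 c1 c2 c3 c4 = ersPoly d0 d1 d2 d3 d4 ↔
      c0 = d0 ∧ (c1 = d1 ∧ c2 = d2) ∧ (c3 = d3 ∧ c4 = d4) := by
  constructor
  · intro h
    obtain ⟨h0, h1, h2, h3, h4⟩ := ersPoly_coeff c0 c1 c2 c3 c4
    obtain ⟨k0, k1, k2, k3, k4⟩ := ersPoly_coeff d0 d1 d2 d3 d4
    rw [h] at h0 h1 h2 h3 h4
    exact ⟨h0.symm.trans k0, ⟨h1.symm.trans k1, h2.symm.trans k2⟩,
      ⟨h3.symm.trans k3, h4.symm.trans k4⟩⟩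
  · rintro ⟨rfl, ⟨rfl, rfl⟩, rfl, rfl⟩
    rfl

theorem ers_card {F : Type*} [Field F] [Fintype F] [DecidableEq F] (q : ℕ)
    (hF : Fintype.card F = q ^ 2) (σ : F →+* F) (hσσ : ∀ x, σ (σ x) = x) (ε : F)
    (hθ : σ ε - ε ≠ 0) : q ≤ (Finset.univ.filter (fun t : F => σ t = t)).card := by
  set S := Finset.univ.filter (fun t : F => σ t = t) with hS
  have hk (x : F) : σ ((σ ε - ε)⁻¹ * (σ x - x)) = (σ ε - ε)⁻¹ * (σ x - x) := by
    rw [map_mul, map_inv₀, map_sub, map_sub, hσσ, hσσ, ← neg_sub (σ ε) ε, inv_neg]; ring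
  have hle : (Finset.univ : Finset F).card ≤ (S ×ˢ S).card := by
    apply Finset.card_le_card_of_injOn
      (fun x => ((σ ε - ε)⁻¹ * (σ x - x), x - ε * ((σ ε - ε)⁻¹ * (σ x - x))))
    · intro x _
      simp only [hS, Finset.coe_product, Set.mem_prod, Finset.mem_coe, Finset.mem_filter,
        Finset.mem_univ, true_and]
      refine ⟨hk x, ?_⟩
      rw [map_sub, map_mul, hk]
      field_simp
      ring
    · intro x _ y _ hxy
      simp only [Prod.mk.injEq] at hxy
      obtain ⟨h1, h2⟩ := hxy
      rw [h1] at h2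
      exact sub_left_inj.1 h2
  rw [Finset.card_univ, hF, Finset.card_product] at hle
  nlinarith

/-- With `ω(t) = (t + εt², t³ + εt⁴)` and `θ = ε^q - ε`:
(i) for each `P ∈ W = F² × C` there is a unique polynomial `f_P` of degree at
most 4 with `f_P(t) = θ⁻¹·F_{ω(t)}(P)` for all `t ∈ K`;
(ii) every coefficient of such a polynomial lies in `K`;
(iii) conversely every polynomial of degree at most 4 with coefficients in `K`
arises this way from a unique `P ∈ W`.
Hence the code `{(θ⁻¹F_{ω(t)}(P))_{t ∈ K} : P ∈ W}` equals the extended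
Reed–Solomon code of degree ≤ 4 polynomials over `K`. -/
theorem code_is_extended_reed_solomon (q : ℕ) (hq : IsPrimePow q) (hq4 : 4 < q)
    (F : Type*) [Field F] [Fintype F] (hF : Fintype.card F = q ^ 2)
    (a b : F) (ha : a ≠ 0) (hb : b ^ q ≠ b)
    (hab : 4 * a ^ (q + 1) + (b ^ q - b) ^ 2 ≠ 0)
    (ε : F) (hε : ε ^ q ≠ ε)
    (C : Finset F) (hC : ∀ x : F, ∃! c : F, c ∈ C ∧ (c - x) ^ q = c - x) :
    (∀ P : F × F × F, P.2.2 ∈ C →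
      ∃! f : Polynomial F, f.degree ≤ 4 ∧
        ∀ t : F, t ^ q = t →
          f.eval t = (ε ^ q - ε)⁻¹ *
            Fw q a b (t + ε * t ^ 2) (t ^ 3 + ε * t ^ 4) P.1 P.2.1 P.2.2) ∧
    (∀ P : F × F × F, P.2.2 ∈ C →
      ∀ f : Polynomial F, f.degree ≤ 4 →
        (∀ t : F, t ^ q = t →
          f.eval t = (ε ^ q - ε)⁻¹ *
            Fw q a b (t + ε * t ^ 2) (t ^ 3 + ε * t ^ 4) P.1 P.2.1 P.2.2) →
        ∀ i : ℕ, (f.coeff i) ^ q = f.coeff i) ∧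
    (∀ f : Polynomial F, f.degree ≤ 4 → (∀ i : ℕ, (f.coeff i) ^ q = f.coeff i) →
      ∃! P : F × F × F, P.2.2 ∈ C ∧
        ∀ t : F, t ^ q = t →
          f.eval t = (ε ^ q - ε)⁻¹ *
            Fw q a b (t + ε * t ^ 2) (t ^ 3 + ε * t ^ 4) P.1 P.2.1 P.2.2) := by
  classical
  obtain ⟨σ, hσ⟩ := ers_frob q hq F hF
  have hσσ : ∀ x, σ (σ x) = x := by
    intro x
    rw [hσ, hσ, ← pow_mul, ← sq, ← hF, FiniteField.pow_card]
  have hθ : σ ε - ε ≠ 0 := by rw [hσ]; exact sub_ne_zero.2 hε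
  have hD : 4 * (σ a * a) + (σ b - b) ^ 2 ≠ 0 := by
    rw [hσ, hσ, ← pow_succ]; exact hab
  have hS : 4 < (Finset.univ.filter (fun t : F => σ t = t)).card :=
    lt_of_lt_of_le hq4 (ers_card q hF σ hσσ ε hθ)
  have key (f : Polynomial F) (hf : f.degree ≤ 4) (x y z : F) :
      (∀ t : F, t ^ q = t → f.eval t = (ε ^ q - ε)⁻¹ *
            Fw q a b (t + ε * t ^ 2) (t ^ 3 + ε * t ^ 4) x y z) ↔ f = ersP σ a b ε x y z := by
    constructor
    · intro h
      refine ers_poly_uniq _ hS f _ hf (ersPoly_degree _ _ _ _ _) ?_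
      intro t ht
      have ht' : t ^ q = t := by rw [← hσ]; exact (Finset.mem_filter.1 ht).2
      rw [h t ht', ersP_eval q σ hσ hσσ a b ε x y z t ht']
    · rintro rfl t ht
      exact ersP_eval q σ hσ hσσ a b ε x y z t ht
  refine ⟨?_, ?_, ?_⟩
  · rintro ⟨x, y, z⟩ _
    refine ⟨ersP σ a b ε x y z, ⟨ersPoly_degree _ _ _ _ _,
      (key _ (ersPoly_degree _ _ _ _ _) x y z).2 rfl⟩, ?_⟩
    rintro g ⟨hg, hg'⟩
    exact (key g hg x y z).1 hg'
  · rintro ⟨x, y, z⟩ _ f hf hf' i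
    rw [(key f hf x y z).1 hf', ← hσ]
    exact ersP_coeff σ hσσ a b ε x y z i
  · intro f hf hfc
    have hfc' (i : ℕ) : σ (f.coeff i) = f.coeff i := by rw [hσ, hfc]
    -- explicit solution
    obtain ⟨x₀, hx₀⟩ : ∃ x₀ : F, x₀ = (4 * (σ a * a) + (σ b - b) ^ 2)⁻¹ *
      (2 * σ a * σ (f.coeff 2 - ε * f.coeff 1) - (σ b - b) * (f.coeff 2 - ε * f.coeff 1)) :=
      ⟨_, rfl⟩
    obtain ⟨y₀, hy₀⟩ : ∃ y₀ : F, y₀ = (4 * (σ a * a) + (σ b - b) ^ 2)⁻¹ *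
      (2 * σ a * σ (f.coeff 4 - ε * f.coeff 3) - (σ b - b) * (f.coeff 4 - ε * f.coeff 3)) :=
      ⟨_, rfl⟩
    obtain ⟨r, hr⟩ : ∃ r : F, r = σ a * (σ x₀ ^ 2 + σ y₀ ^ 2) - a * (x₀ ^ 2 + y₀ ^ 2)
      - (σ b - b) * (σ x₀ * x₀ + σ y₀ * y₀) := ⟨_, rfl⟩
    have hrσ : σ r = -r := by
      rw [hr]
      simp only [map_add, map_sub, map_mul, map_pow, hσσ]
      ring
    have iff1 (x y z : F) : f = ersP σ a b ε x y z ↔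
        x = x₀ ∧ y = y₀ ∧ σ z - z = (σ ε - ε) * f.coeff 0 - r := by
      have e1 : f = ersP σ a b ε x y z ↔
        ersPoly (f.coeff 0) (f.coeff 1) (f.coeff 2) (f.coeff 3) (f.coeff 4)
          = ersP σ a b ε x y z := by rw [← ersPoly_eta f hf]
      rw [e1]
      unfold ersP
      simp only []
      rw [ersPoly_inj, ers_u σ ε _ _ _ hθ (hfc' 1) (hfc' 2),
        ers_u σ ε _ _ _ hθ (hfc' 3) (hfc' 4), ers_L σ hσσ a b x _ hD, ers_L σ hσσ a b y _ hD,
        ← hx₀, ← hy₀]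
      constructor
      · rintro ⟨h0, rfl, rfl⟩
        refine ⟨rfl, rfl, ?_⟩
        rw [h0, mul_inv_cancel_left₀ hθ, hr]
        ring
      · rintro ⟨rfl, rfl, h0⟩
        refine ⟨?_, rfl, rfl⟩
        rw [eq_inv_mul_iff_mul_eq₀ hθ]
        linear_combination -h0 + hr
    obtain ⟨k, hk⟩ : ∃ k : F, k = (σ ε - ε)⁻¹ * ((σ ε - ε) * f.coeff 0 - r) := ⟨_, rfl⟩
    have hkσ : σ k = k := by
      rw [hk, map_mul, map_inv₀, map_sub, map_sub, map_mul, map_sub, hσσ, hrσ, hfc',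
        ← neg_sub (σ ε) ε, inv_neg]
      ring
    have hk' : (σ ε - ε) * k = (σ ε - ε) * f.coeff 0 - r := by
      rw [hk, mul_inv_cancel_left₀ hθ]
    obtain ⟨c, ⟨hcC, hc⟩, hcu⟩ := hC (ε * k)
    have iff2 (z : F) : (z - ε * k) ^ q = z - ε * k ↔
        σ z - z = (σ ε - ε) * f.coeff 0 - r := by
      rw [← hσ, map_sub, map_mul, hkσ, ← hk']
      constructor
      · intro h
        linear_combination h
      · intro h
        linear_combination h
    refine ⟨(x₀, y₀, c), ⟨hcC, (key f hf _ _ _).2 ((iff1 _ _ _).2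
      ⟨rfl, rfl, (iff2 c).1 hc⟩)⟩, ?_⟩
    rintro ⟨x, y, z⟩ ⟨hz, h⟩
    obtain ⟨h1, h2, h3⟩ := (iff1 x y z).1 ((key f hf x y z).1 h)
    have h4 : z = c := hcu z ⟨hz, (iff2 z).2 h3⟩
    rw [h1, h2, h4]
end

section
/- Suppose q > 4 and 0 ∈ C. Let t₁,…,t₅ be five pairwise distinct elements of K and set ω_j = (t_j + εt_j², t_j³ + εt_j⁴) for j = 1,…,5. Then the only point (x,y,z) ∈ W = F² × C satisfying F_{ω_j}(x,y,z) = 0 for all j = 1,…,5 is (x,y,z) = (0,0,0). In particular any five of the q varieties V(F_ω), ω ∈ Ω = {(t+εt², t³+εt⁴) : t ∈ K}, meet W in exactly one point. -/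
/-- For `q > 4` and five distinct parameters `t₁,…,t₅ ∈ K` with
`ω_j = (t_j + εt_j², t_j³ + εt_j⁴)`, the only point of `W = F² × C` lying on all
five varieties `V(F_{ω_j})` is `(0,0,0)`: any five of the `q` varieties
`V(F_ω)`, `ω ∈ Ω`, meet `W` in exactly one point. -/
theorem five_varieties_meet_in_one_point (q : ℕ) (hq : IsPrimePow q) (hq4 : 4 < q)
    (F : Type*) [Field F] [Fintype F] (hF : Fintype.card F = q ^ 2)
    (a b : F) (ha : a ≠ 0) (hb : b ^ q ≠ b)
    (hab : 4 * a ^ (q + 1) + (b ^ q - b) ^ 2 ≠ 0)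
    (ε : F) (hε : ε ^ q ≠ ε)
    (C : Finset F) (hC : ∀ x : F, ∃! c : F, c ∈ C ∧ (c - x) ^ q = c - x)
    (h0C : (0 : F) ∈ C)
    (t : Fin 5 → F) (ht : ∀ j, (t j) ^ q = t j) (htinj : Function.Injective t)
    (x y z : F) (hz : z ∈ C)
    (hsol : ∀ j : Fin 5,
      Fw q a b (t j + ε * t j ^ 2) (t j ^ 3 + ε * t j ^ 4) x y z = 0) :
    x = 0 ∧ y = 0 ∧ z = 0 := by
  have hfrob : ∀ u v : F, (u + v) ^ q = u ^ q + v ^ q := by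
    obtain ⟨p, k, hp, hk, rfl⟩ := hq
    have hp' : p.Prime := hp.nat_prime
    have : Fact p.Prime := ⟨hp'⟩
    obtain ⟨r, hr⟩ := CharP.exists F
    have := hr
    obtain ⟨n, hrp, hn⟩ := FiniteField.card F r
    have hrd : r ∣ p := by
      have h1 : r ∣ (p ^ k) ^ 2 := by
        rw [← hF, hn]
        exact dvd_pow_self r n.pos.ne'
      exact hrp.dvd_of_dvd_pow (hrp.dvd_of_dvd_pow h1)
    have hrr : r = p := (Nat.prime_dvd_prime_iff_eq hrp hp').1 hrd
    subst hrr
    intro u v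
    exact add_pow_char_pow u v r k
  have h0q : (0 : F) ^ q = 0 := zero_pow (by omega)
  let c : Fin 5 → F := ![Fw q a b 0 0 x y z,
    (2 * a ^ q * x ^ q - (b ^ q - b) * x) - ((b ^ q - b) * x ^ q + 2 * a * x),
    ε ^ q * (2 * a ^ q * x ^ q - (b ^ q - b) * x) - ε * ((b ^ q - b) * x ^ q + 2 * a * x),
    (2 * a ^ q * y ^ q - (b ^ q - b) * y) - ((b ^ q - b) * y ^ q + 2 * a * y),
    ε ^ q * (2 * a ^ q * y ^ q - (b ^ q - b) * y) - ε * ((b ^ q - b) * y ^ q + 2 * a * y)]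
  have hpow : ∀ (j : Fin 5) (m : ℕ), (t j ^ m) ^ q = t j ^ m := by
    intro j m
    rw [← pow_mul, mul_comm, pow_mul, ht]
  have hc : c = 0 := by
    apply Matrix.eq_zero_of_forall_index_sum_pow_mul_eq_zero htinj
    intro j
    have h := hsol j
    simp only [Fw, hfrob, mul_pow, hpow, ht] at h
    simp only [c, Fin.sum_univ_five, Fw, h0q]
    simp
    linear_combination h
  have key : ∀ w : F, (2 * a ^ q * w ^ q - (b ^ q - b) * w) - ((b ^ q - b) * w ^ q + 2 * a * w) = 0 →
      ε ^ q * (2 * a ^ q * w ^ q - (b ^ q - b) * w) - ε * ((b ^ q - b) * w ^ q + 2 * a * w) = 0 →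
      w = 0 := by
    intro w h1 h2
    have hQ : (b ^ q - b) * w ^ q + 2 * a * w = 0 := by
      have : (ε ^ q - ε) * ((b ^ q - b) * w ^ q + 2 * a * w) = 0 := by
        linear_combination h2 - ε ^ q * h1
      exact (mul_eq_zero.1 this).resolve_left (sub_ne_zero.2 hε)
    have : (4 * a ^ (q + 1) + (b ^ q - b) ^ 2) * w = 0 := by
      rw [pow_succ]
      linear_combination (2 * a ^ q - (b ^ q - b)) * hQ - (b ^ q - b) * h1
    exact (mul_eq_zero.1 this).resolve_left hab
  have hx : x = 0 := key x (congrFun hc 1) (congrFun hc 2)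
  have hy : y = 0 := key y (congrFun hc 3) (congrFun hc 4)
  refine ⟨hx, hy, ?_⟩
  have hzq : z ^ q = z := by
    have h : Fw q a b 0 0 x y z = 0 := congrFun hc 0
    have h2q : (0 : F) ^ (2 * q) = 0 := zero_pow (by omega)
    simp only [Fw, hx, hy, h0q, h2q, zero_pow (Nat.succ_ne_zero q)] at h
    linear_combination h
  exact (hC 0).unique ⟨hz, by simpa using hzq⟩ ⟨h0C, by simpa using h0q⟩
end
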